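/- Let 𝒫 be a nonempty admissible, linearly repetitive set of abstract patterns in ℝ^d. Then the translation action of ℝ^d on Ω(𝒫), given by t·T = T − t = {m − t : m ∈ T}, is uniquely ergodic: there exists exactly one translation-invariant Borel probability measure on the compact metric space Ω(𝒫). -/

import Mathlib

open Metric Set Filter MeasureTheory Topology

noncomputable section

/-- Points of `ℝ^d`. -/
abbrev Pt (d : ℕ) := EuclideanSpace ℝ (Fin d)

variable (d : ℕ)

/-- A tile: a subset of `ℝ^d` homeomorphic to the closed unit ball. -/
def IsTile (m : Set (Pt d)) : Prop :=
  Nonempty (m ≃ₜ (Metric.closedBall (0 : Pt d) 1))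

/-- A pattern: a finite nonempty collection of tiles whose interiors are pairwise disjoint. -/
def IsPattern (M : Set (Set (Pt d))) : Prop :=
  M.Finite ∧ M.Nonempty ∧ (∀ m ∈ M, IsTile d m) ∧
    M.Pairwise fun m m' => interior m ∩ interior m' = ∅

/-- A tiling of `ℝ^d`: a collection of tiles with pairwise disjoint interiors covering `ℝ^d`. -/
def IsTiling (T : Set (Set (Pt d))) : Prop :=
  (∀ m ∈ T, IsTile d m) ∧
    (T.Pairwise fun m m' => interior m ∩ interior m' = ∅) ∧ ⋃₀ T = Set.univ

/-- Translation of a pattern by `t`. -/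
def patTrans (t : Pt d) (M : Set (Set (Pt d))) : Set (Set (Pt d)) :=
  (fun m => (fun x => x + t) '' m) '' M

/-- Support (underlying set) of a pattern. -/
def supp (M : Set (Set (Pt d))) : Set (Pt d) := ⋃₀ M

/-- Inner radius: the largest `r` such that some closed ball of radius `r` fits inside `s(M)`. -/
def rIn (M : Set (Set (Pt d))) : ℝ :=
  sSup {r : ℝ | ∃ x : Pt d, Metric.closedBall x r ⊆ supp d M}

/-- Outer radius: the smallest `r` such that some closed ball of radius `r` contains `s(M)`. -/
def rOut (M : Set (Set (Pt d))) : ℝ :=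
  sInf {r : ℝ | ∃ x : Pt d, supp d M ⊆ Metric.closedBall x r}

/-- The pattern class of `P` is a subpattern of (the class of) `Q`:
some translate of `P` is contained in `Q`. -/
def SubpatternClass (P Q : Set (Set (Pt d))) : Prop :=
  ∃ t : Pt d, patTrans d t P ⊆ Q

/-- A set of abstract patterns is modelled as a translation-closed set `Ps` of concrete
patterns (the union of the pattern classes).  `Admissible` encodes conditions
(i)–(iii) of Definition 2.1. -/
structure Admissible (Ps : Set (Set (Set (Pt d)))) : Prop where
  pattern : ∀ P ∈ Ps, IsPattern d P
  transClosed : ∀ (t : Pt d), ∀ P ∈ Ps, patTrans d t P ∈ Ps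
  subClosed : ∀ P ∈ Ps, ∀ Q : Set (Set (Pt d)), IsPattern d Q → Q ⊆ P → Q ∈ Ps
  tileBounds : ∃ rmin rmax : ℝ, 0 < rmin ∧ rmin ≤ rmax ∧
    ∀ m : Set (Pt d), ({m} : Set (Set (Pt d))) ∈ Ps →
      rmin ≤ rIn d {m} ∧ rIn d {m} ≤ rOut d {m} ∧ rOut d {m} ≤ rmax
  extend : ∀ P ∈ Ps, (0 : Pt d) ∈ supp d P → ∀ r : ℝ, 0 < r →
    ∃ Q ∈ Ps, P ⊆ Q ∧ Metric.closedBall (0 : Pt d) r ⊆ supp d Q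

/-- Linear repetitivity of a (translation-closed) set of patterns. -/
def LinearlyRepetitive (Ps : Set (Set (Set (Pt d)))) : Prop :=
  ∃ c : ℝ, 0 < c ∧ ∀ P ∈ Ps, 1 ≤ rOut d P →
    ∀ Q ∈ Ps, c * rOut d P ≤ rIn d Q → SubpatternClass d P Q

/-- The box determined by corner functions `a b : Fin d → ℝ`. -/
def boxSet (a b : Fin d → ℝ) : Set (Pt d) := {x | ∀ j, x j ∈ Set.Icc (a j) (b j)}

/-- `B` is a box. -/
def IsBox (B : Set (Pt d)) : Prop :=
  ∃ a b : Fin d → ℝ, (∀ j, a j < b j) ∧ B = boxSet d a b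

/-- `B` is an `r`-box: all side lengths lie in `[r, 2r]`. -/
def IsRBox (r : ℝ) (B : Set (Pt d)) : Prop :=
  ∃ a b : Fin d → ℝ, (∀ j, a j < b j) ∧ B = boxSet d a b ∧
    ∀ j, r ≤ b j - a j ∧ b j - a j ≤ 2 * r

/-- Width of a box: the minimum of its side lengths. -/
def widthOf (B : Set (Pt d)) : ℝ :=
  ⨅ j : Fin d, (sSup ((fun x : Pt d => x j) '' B) - sInf ((fun x : Pt d => x j) '' B))

/-- Volume of a subset of `ℝ^d`. -/
def volOf (B : Set (Pt d)) : ℝ := (volume B).toReal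

/-- Restriction `M ∩ B` of a pattern or tiling `M` to `B`. -/
def patRestrict (M : Set (Set (Pt d))) (B : Set (Pt d)) : Set (Set (Pt d)) :=
  {s | ∃ m ∈ M, (m ∩ interior B).Nonempty ∧ s = m ∩ B}

/-- The set `Ps_B` of box-patterns derived from `Ps` (concrete representatives). -/
def BoxPatterns (Ps : Set (Set (Set (Pt d)))) : Set (Set (Set (Pt d))) :=
  {Q | ∃ P ∈ Ps, ∃ B : Set (Pt d), IsBox d B ∧ B ⊆ supp d P ∧ Q = patRestrict d P B}

/-- The set `Ps(r)` of `r`-patterns derived from `Ps`. -/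
def RPatterns (Ps : Set (Set (Set (Pt d)))) (r : ℝ) : Set (Set (Set (Pt d))) :=
  {Q | ∃ P ∈ Ps, ∃ B : Set (Pt d), IsRBox d r B ∧ B ⊆ supp d P ∧ Q = patRestrict d P B}

/-- Width of a box-pattern. -/
def patWidth (M : Set (Set (Pt d))) : ℝ := widthOf d (supp d M)

/-- Volume of a box-pattern. -/
def patVol (M : Set (Set (Pt d))) : ℝ := volOf d (supp d M)

/-- A subadditive function on `Ps_B`, with constants `dF, rF` and error function `cF`.
`F` is defined on concrete patterns and is translation-invariant (i.e. well defined on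
pattern classes). -/
structure SubadditiveOn (Ps : Set (Set (Set (Pt d)))) (F : Set (Set (Pt d)) → ℝ)
    (dF rF : ℝ) (cF : ℝ → ℝ) : Prop where
  invariant : ∀ (t : Pt d), ∀ M ∈ BoxPatterns d Ps, F (patTrans d t M) = F M
  dF_nonneg : 0 ≤ dF
  rF_nonneg : 0 ≤ rF
  cF_anti : ∀ r s : ℝ, rF ≤ r → r ≤ s → cF s ≤ cF r
  cF_lim : Tendsto cF atTop (nhds 0)
  subadd : ∀ M ∈ BoxPatterns d Ps, ∀ (n : ℕ) (Bj : Fin n → Set (Pt d)),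
    (∀ j, IsBox d (Bj j)) →
    (∀ i j, i ≠ j → interior (Bj i) ∩ interior (Bj j) = ∅) →
    (⋃ j, Bj j) = supp d M →
    (∀ j, rF ≤ widthOf d (Bj j)) →
    F M ≤ (∑ j, F (patRestrict d M (Bj j))) +
      ∑ j, cF (widthOf d (Bj j)) * volOf d (Bj j)
  bound : ∀ M ∈ BoxPatterns d Ps, |F M| ≤ dF * patVol d M

/-- The upper mean `F⁺(r)`. -/
def Fplus (Ps : Set (Set (Set (Pt d)))) (F : Set (Set (Pt d)) → ℝ) (r : ℝ) : ℝ :=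
  sSup ((fun P => F P / patVol d P) '' RPatterns d Ps r)

/-- The lower mean `F⁻(r)`. -/
def Fminus (Ps : Set (Set (Set (Pt d)))) (F : Set (Set (Pt d)) → ℝ) (r : ℝ) : ℝ :=
  sInf ((fun P => F P / patVol d P) '' RPatterns d Ps r)


/-- The tiling space `Ω(𝒫)`: all tilings all of whose finite subpattern classes lie in `Ps`. -/
def TilingsOf (Ps : Set (Set (Set (Pt d)))) : Set (Set (Set (Pt d))) :=
  {T | IsTiling d T ∧ ∀ M : Set (Set (Pt d)), IsPattern d M → M ⊆ T → M ∈ Ps}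

/-- The metric `d(T,S)` on the tiling space. -/
def tdist (T S : Set (Set (Pt d))) : ℝ :=
  sInf {ε : ℝ | 0 < ε ∧ ∃ t : Pt d, ‖t‖ ≤ ε ∧
    patRestrict d T (Metric.closedBall (0 : Pt d) (1 / ε)) =
      patRestrict d (patTrans d t S) (Metric.closedBall (0 : Pt d) (1 / ε))}

/-- `Ω(Ps)` as a type. -/
def Omega (Ps : Set (Set (Set (Pt d)))) : Type :=
  {T : Set (Set (Pt d)) // T ∈ TilingsOf d Ps}

/-- The metric topology of `Ω(Ps)`, generated by the open balls of the metric `d`. -/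
def omegaTop (Ps : Set (Set (Set (Pt d)))) : TopologicalSpace (Omega d Ps) :=
  TopologicalSpace.generateFrom
    {U | ∃ (T₀ : Omega d Ps) (ε : ℝ), 0 < ε ∧ U = {S | tdist d T₀.1 S.1 < ε}}

/-- The translation action `t · T = T - t` on `Ω(Ps)`.  (For admissible `Ps` the translate
of a tiling in `Ω(Ps)` again lies in `Ω(Ps)`, so the `dite` below always takes its first
branch; phrasing it this way keeps the map total.) -/
def omegaTranslate (Ps : Set (Set (Set (Pt d)))) (t : Pt d) (S : Omega d Ps) :
    Omega d Ps :=
  haveI := Classical.propDecidable (patTrans d (-t) S.1 ∈ TilingsOf d Ps)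
  if h : patTrans d (-t) S.1 ∈ TilingsOf d Ps then ⟨patTrans d (-t) S.1, h⟩ else S

/-!
Linear repetitivity makes any two tilings comparable: everything seen of one during the
translations by a ball of radius `R` is seen of the other, up to a shift, during those by a ball
of radius `(2 * C + 1) * R`. Averaging over such balls, any two invariant probability measures
dominate each other up to a fixed factor on the open sets recognised by patches of bounded radius,
hence on all Borel sets. Two different ones cannot exist: conditioning one of them on the set
where the density of the other exceeds `1` would give a third one, which does not dominate it.
Existence is the Krylov–Bogoliubov argument along closed balls.
-/

section InvariantProbability

variable {ι X : Type*} [MeasurableSpace X]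

/-- `μ` is a probability measure that every map of the family `φ` leaves invariant.  Measurability
of the maps is not part of the notion, so `Measure.map` is only meaningful next to such a
hypothesis. -/
def IsInvariantProbability (φ : ι → X → X) (μ : Measure X) : Prop :=
  IsProbabilityMeasure μ ∧ ∀ t, Measure.map (φ t) μ = μ

variable {φ : ι → X → X} {μ ν : Measure X}

lemma IsInvariantProbability.measurePreserving (hμ : IsInvariantProbability φ μ) {t : ι}
    (hφ : Measurable (φ t)) : MeasurePreserving (φ t) μ μ :=
  ⟨hφ, hμ.2 t⟩

lemma IsInvariantProbability.cond (hμ : IsInvariantProbability φ μ) (hφ : ∀ t, Measurable (φ t))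
    {A : Set X} (hA : MeasurableSet A) (hA0 : μ A ≠ 0) (hinv : ∀ t, φ t ⁻¹' A =ᵐ[μ] A) :
    IsInvariantProbability φ (ProbabilityTheory.cond μ A) := by
  have := hμ.1
  refine ⟨ProbabilityTheory.cond_isProbabilityMeasure hA0, fun t => ?_⟩
  have hrestrict : Measure.map (φ t) (μ.restrict A) = μ.restrict A := by
    rw [← Measure.restrict_congr_set (hinv t),
      ((hμ.measurePreserving (hφ t)).restrict_preimage hA).map_eq,
      Measure.restrict_congr_set (hinv t)]
  rw [ProbabilityTheory.cond, Measure.map_smul, hrestrict]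

/-- If the density `dν/dμ` exceeded `1` exactly on a set `A` with `0 < μ A < 1`, then `μ`
conditioned on `A` would be an invariant probability measure that does not dominate `μ`. -/
theorem IsInvariantProbability.eq_of_forall_absolutelyContinuous (hφ : ∀ t, Measurable (φ t))
    (hac : ∀ μ ν : Measure X, IsInvariantProbability φ μ → IsInvariantProbability φ ν → ν ≪ μ)
    (hμ : IsInvariantProbability φ μ) (hν : IsInvariantProbability φ ν) : μ = ν := by
  have := hμ.1
  have := hν.1
  let A : Set X := {x | 1 < ν.rnDeriv μ x}
  have hA : MeasurableSet A := Measure.measurable_rnDeriv ν μ measurableSet_Ioi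
  have hdensity : μ.withDensity (ν.rnDeriv μ) = ν :=
    Measure.withDensity_rnDeriv_eq ν μ (hac μ ν hμ hν)
  have hinv : ∀ t, φ t ⁻¹' A =ᵐ[μ] A := fun t =>
    ((hν.measurePreserving (hφ t)).rnDeriv_comp_aeEq
      (hμ.measurePreserving (hφ t))).fun_comp (1 < ·)
  by_cases hA0 : μ A = 0
  · have hle : ν.rnDeriv μ ≤ᵐ[μ] 1 := by
      filter_upwards [measure_eq_zero_iff_ae_notMem.1 hA0] with x hx using not_lt.1 hx
    refine (Measure.eq_of_le_of_isProbabilityMeasure ?_).symm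
    simpa only [hdensity, withDensity_one] using withDensity_mono hle
  · have hfull : ∀ᵐ x ∂μ, x ∈ A :=
      (hac _ _ (hμ.cond hφ hA hA0 hinv) hμ).ae_le (ProbabilityTheory.ae_cond_mem hA)
    refine Measure.eq_of_le_of_isProbabilityMeasure ?_
    have hge : 1 ≤ᵐ[μ] ν.rnDeriv μ := hfull.mono fun x hx => hx.le
    simpa only [hdensity, withDensity_one] using withDensity_mono hge

end InvariantProbability

section KrylovBogoliubov

open scoped Pointwise

lemma norm_setIntegral_sub_setIntegral_le_mul_symmDiff {α E : Type*} [MeasurableSpace α]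
    [NormedAddCommGroup E] [NormedSpace ℝ E] {μ : Measure α} {g : α → E} {s t : Set α} {M : ℝ}
    (hs : MeasurableSet s) (ht : MeasurableSet t) (hμs : μ s ≠ ⊤) (hμt : μ t ≠ ⊤)
    (hgs : IntegrableOn g s μ) (hgt : IntegrableOn g t μ) (hM : ∀ x, ‖g x‖ ≤ M) :
    ‖∫ x in s, g x ∂μ - ∫ x in t, g x ∂μ‖ ≤ M * μ.real (symmDiff s t) := by
  have hst : μ (s \ t) < ⊤ := (measure_mono sdiff_subset).trans_lt hμs.lt_top
  have hts : μ (t \ s) < ⊤ := (measure_mono sdiff_subset).trans_lt hμt.lt_top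
  calc ‖∫ x in s, g x ∂μ - ∫ x in t, g x ∂μ‖
      = ‖∫ x in s \ t, g x ∂μ - ∫ x in t \ s, g x ∂μ‖ := by
        rw [← integral_inter_add_sdiff ht hgs, ← integral_inter_add_sdiff hs hgt, inter_comm t s,
          add_sub_add_left_eq_sub]
    _ ≤ ‖∫ x in s \ t, g x ∂μ‖ + ‖∫ x in t \ s, g x ∂μ‖ := norm_sub_le _ _
    _ ≤ M * μ.real (s \ t) + M * μ.real (t \ s) :=
        add_le_add (norm_setIntegral_le_of_norm_le_const hst fun x _ => hM x)
          (norm_setIntegral_le_of_norm_le_const hts fun x _ => hM x)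
    _ = M * μ.real (symmDiff s t) := by
        rw [measureReal_symmDiff_eq hs ht hμs hμt, mul_add]

lemma exists_isInvariantProbability_of_tendsto_integral {ι κ X : Type*} [TopologicalSpace X]
    [SecondCountableTopology X] [T2Space X] [CompactSpace X] [MeasurableSpace X] [BorelSpace X]
    {φ : κ → X → X} (hφ : ∀ t, Continuous (φ t)) {l : Filter ι} [l.NeBot]
    {ν : ι → ProbabilityMeasure X}
    (hν : ∀ t, ∀ f : BoundedContinuousFunction X ℝ,
      Tendsto (fun i => ∫ x, f (φ t x) ∂(ν i : Measure X) - ∫ x, f x ∂(ν i : Measure X))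
        l (𝓝 0)) :
    ∃ μ : Measure X, IsInvariantProbability φ μ := by
  obtain ⟨μ, -, hμ⟩ := (isCompact_univ (X := ProbabilityMeasure X)).ultrafilter_le_nhds
    ((Ultrafilter.of l).map ν) (by simp)
  have hlim := ProbabilityMeasure.tendsto_iff_forall_integral_tendsto.1
    (show Tendsto ν (Ultrafilter.of l) (𝓝 μ) from hμ)
  refine ⟨μ, inferInstance, fun t => ?_⟩
  have : IsProbabilityMeasure (Measure.map (φ t) (μ : Measure X)) :=
    Measure.isProbabilityMeasure_map (hφ t).aemeasurable
  refine ext_of_forall_integral_eq_of_IsFiniteMeasure fun f => ?_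
  rw [integral_map (hφ t).aemeasurable f.continuous.aestronglyMeasurable]
  exact sub_eq_zero.1 (tendsto_nhds_unique
    ((hlim (f.compContinuous ⟨φ t, hφ t⟩)).sub (hlim f))
    ((hν t f).mono_left (Ultrafilter.of_le l)))

variable {G X : Type*} [AddGroup G] [TopologicalSpace G] [MeasurableSpace G]
  [BorelSpace G] [TopologicalSpace X] [MeasurableSpace X] [BorelSpace X]

/-- The distribution of `ϕ s x` when `s` is uniformly distributed on `F` with respect to `μ`. -/
def orbitAverage (ϕ : Flow G X) (μ : Measure G) (F : Set G) (x : X) : Measure X :=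
  Measure.map (fun s => ϕ s x) (ProbabilityTheory.cond μ F)

lemma integral_orbitAverage (ϕ : Flow G X) (μ : Measure G) (F : Set G) (x : X)
    {f : X → ℝ} (hf : Continuous f) :
    ∫ y, f y ∂(orbitAverage ϕ μ F x) = (μ.real F)⁻¹ * ∫ s in F, f (ϕ s x) ∂μ := by
  have horbit : Continuous fun s => ϕ s x := ϕ.continuous continuous_id continuous_const
  rw [orbitAverage, integral_map horbit.aemeasurable hf.aestronglyMeasurable,
    ProbabilityTheory.cond, integral_smul_measure, ENNReal.toReal_inv, smul_eq_mul, measureReal_def]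

lemma norm_integral_orbitAverage_sub_le [ContinuousAdd G] (ϕ : Flow G X) (μ : Measure G)
    [μ.IsAddLeftInvariant] {F : Set G} (hF : MeasurableSet F) (hFtop : μ F ≠ ⊤) (x : X)
    (f : BoundedContinuousFunction X ℝ) (t : G) :
    ‖∫ y, f (ϕ t y) ∂(orbitAverage ϕ μ F x) - ∫ y, f y ∂(orbitAverage ϕ μ F x)‖ ≤
      ‖f‖ * (μ (symmDiff (t +ᵥ F) F) / μ F).toReal := by
  have horbit : Continuous fun s => f (ϕ s x) :=
    f.continuous.comp (ϕ.continuous continuous_id continuous_const)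
  have hvadd : MeasurableSet (t +ᵥ F) := hF.const_vadd t
  have hvadd_top : μ (t +ᵥ F) ≠ ⊤ := by rwa [measure_vadd]
  have hshift : ∫ s in F, f (ϕ t (ϕ s x)) ∂μ = ∫ s in t +ᵥ F, f (ϕ s x) ∂μ := by
    simp only [← ϕ.map_add]
    exact ((measurePreserving_add_left μ t).setIntegral_image_emb
      (measurableEmbedding_addLeft t) (fun s => f (ϕ s x)) F).symm
  have hint : ∀ s, μ s ≠ ⊤ → IntegrableOn (fun s => f (ϕ s x)) s μ := fun s hs =>
    IntegrableOn.of_bound hs.lt_top horbit.aestronglyMeasurable ‖f‖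
      (ae_of_all _ fun u => f.norm_coe_le_norm _)
  rw [integral_orbitAverage ϕ μ F x f.continuous,
    integral_orbitAverage ϕ μ F x (f := fun y => f (ϕ t y))
      (f.continuous.comp (ϕ.continuous_toFun t)), hshift, ← mul_sub, norm_mul,
    Real.norm_of_nonneg (inv_nonneg.2 measureReal_nonneg), ENNReal.toReal_div]
  calc (μ.real F)⁻¹ * ‖∫ s in t +ᵥ F, f (ϕ s x) ∂μ - ∫ s in F, f (ϕ s x) ∂μ‖
      ≤ (μ.real F)⁻¹ * (‖f‖ * μ.real (symmDiff (t +ᵥ F) F)) := by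
        gcongr
        exact norm_setIntegral_sub_setIntegral_le_mul_symmDiff hvadd hF hvadd_top hFtop
          (hint _ hvadd_top) (hint _ hFtop) fun u => f.norm_coe_le_norm _
    _ = ‖f‖ * (μ.real (symmDiff (t +ᵥ F) F) / μ.real F) := by ring

theorem exists_isInvariantProbability_of_isAddFoelner [ContinuousAdd G]
    [SecondCountableTopology X] [T2Space X] [CompactSpace X] [Nonempty X] (ϕ : Flow G X)
    {ι : Type*} {l : Filter ι} [l.NeBot] {μ : Measure G} [μ.IsAddLeftInvariant] {F : ι → Set G}
    (hF : IsAddFoelner G μ l F) : ∃ ν : Measure X, IsInvariantProbability ϕ ν := by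
  obtain ⟨x⟩ := ‹Nonempty X›
  have hprob : ∀ᶠ i in l, ∃ p : ProbabilityMeasure X,
      (p : Measure X) = orbitAverage ϕ μ (F i) x := by
    filter_upwards [hF.eventually_meas_ne_zero, hF.eventually_meas_ne_top] with i hi0 hitop
    have := ProbabilityTheory.cond_isProbabilityMeasure_of_finite hi0 hitop
    exact ⟨⟨_, Measure.isProbabilityMeasure_map
      (ϕ.continuous continuous_id continuous_const).aemeasurable⟩, rfl⟩
  have : Nonempty (ProbabilityMeasure X) := ⟨⟨Measure.dirac x, inferInstance⟩⟩
  obtain ⟨p, hp⟩ := hprob.choice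
  refine exists_isInvariantProbability_of_tendsto_integral (l := l) (ν := p)
    ϕ.continuous_toFun fun t f => ?_
  have hratio : Tendsto (fun i => ‖f‖ * (μ (symmDiff (t +ᵥ F i) (F i)) / μ (F i)).toReal) l
      (𝓝 0) := by
    simpa using ((ENNReal.tendsto_toReal ENNReal.zero_ne_top).comp
      (hF.tendsto_meas_vadd_symmDiff t)).const_mul ‖f‖
  refine squeeze_zero_norm' ?_ hratio
  filter_upwards [hp, hF.eventually_measurableSet, hF.eventually_meas_ne_top] with i hpi hi hitop
  simp only [hpi]
  exact norm_integral_orbitAverage_sub_le ϕ μ hi hitop x f t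

end KrylovBogoliubov

section ClosedBallFoelner

open scoped Pointwise

variable {E : Type*} [NormedAddCommGroup E] [NormedSpace ℝ E] [FiniteDimensional ℝ E]
  [MeasurableSpace E] [BorelSpace E]

lemma symmDiff_vadd_closedBall_subset {E : Type*} [SeminormedAddCommGroup E] (t : E) (r : ℝ) :
    symmDiff (t +ᵥ closedBall (0 : E) r) (closedBall 0 r) ⊆
      closedBall 0 (r + ‖t‖) \ closedBall 0 r ∪ closedBall 0 (r + ‖t‖) \ closedBall t r := by
  have ht : closedBall t r ⊆ closedBall (0 : E) (r + ‖t‖) := closedBall_subset_closedBall' (by simp)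
  have h0 : closedBall 0 r ⊆ closedBall (0 : E) (r + ‖t‖) :=
    closedBall_subset_closedBall (le_add_of_nonneg_right (norm_nonneg t))
  rw [vadd_closedBall, vadd_eq_add, add_zero]
  exact union_subset_union (sdiff_subset_sdiff_left ht) (sdiff_subset_sdiff_left h0)

lemma measure_symmDiff_vadd_closedBall_div_le (μ : Measure E) [μ.IsAddHaarMeasure] (t : E) {r : ℝ}
    (hr : 0 < r) :
    μ (symmDiff (t +ᵥ closedBall (0 : E) r) (closedBall 0 r)) / μ (closedBall (0 : E) r) ≤
      2 * (ENNReal.ofReal ((1 + ‖t‖ / r) ^ Module.finrank ℝ E) - 1) := by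
  set c := ENNReal.ofReal ((1 + ‖t‖ / r) ^ Module.finrank ℝ E)
  have hlarge : μ (closedBall 0 (r + ‖t‖)) = c * μ (closedBall (0 : E) r) := by
    rw [← Measure.addHaar_closedBall_mul μ 0 (by positivity) hr.le,
      show (1 + ‖t‖ / r) * r = r + ‖t‖ by field_simp]
  have hshell : ∀ y : E, closedBall y r ⊆ closedBall 0 (r + ‖t‖) →
      μ (closedBall 0 (r + ‖t‖) \ closedBall y r) = (c - 1) * μ (closedBall (0 : E) r) := by
    intro y hy
    rw [measure_sdiff hy isClosed_closedBall.nullMeasurableSet measure_closedBall_lt_top.ne,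
      Measure.addHaar_closedBall_center μ y, hlarge,
      ENNReal.sub_mul fun _ _ => measure_closedBall_lt_top.ne, one_mul]
  refine ENNReal.div_le_of_le_mul ?_
  calc μ (symmDiff (t +ᵥ closedBall (0 : E) r) (closedBall 0 r))
      ≤ μ (closedBall 0 (r + ‖t‖) \ closedBall 0 r) +
          μ (closedBall 0 (r + ‖t‖) \ closedBall t r) :=
        (measure_mono (symmDiff_vadd_closedBall_subset t r)).trans (measure_union_le _ _)
    _ = 2 * (c - 1) * μ (closedBall (0 : E) r) := by
        rw [hshell 0 (closedBall_subset_closedBall (le_add_of_nonneg_right (norm_nonneg t))),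
          hshell t (closedBall_subset_closedBall' (by simp)), ← two_mul, mul_assoc]

theorem isAddFoelner_closedBall (μ : Measure E) [μ.IsAddHaarMeasure] :
    IsAddFoelner E μ atTop fun r : ℝ => closedBall (0 : E) r where
  eventually_measurableSet := .of_forall fun _ => isClosed_closedBall.measurableSet
  eventually_meas_ne_zero :=
    (eventually_gt_atTop 0).mono fun _ hr => (measure_closedBall_pos μ _ hr).ne'
  eventually_meas_ne_top := .of_forall fun _ => measure_closedBall_lt_top.ne
  tendsto_meas_vadd_symmDiff t := by
    have hratio : Tendsto (fun r : ℝ => (1 + ‖t‖ / r) ^ Module.finrank ℝ E) atTop (𝓝 1) := by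
      simpa using ((tendsto_id.const_div_atTop ‖t‖).const_add 1).pow (Module.finrank ℝ E)
    have hbound : Tendsto
        (fun r : ℝ => 2 * (ENNReal.ofReal ((1 + ‖t‖ / r) ^ Module.finrank ℝ E) - 1))
        atTop (𝓝 0) := by
      have hdiff := ENNReal.Tendsto.sub (ENNReal.tendsto_ofReal hratio)
        (tendsto_const_nhds (x := (1 : ENNReal))) (.inr ENNReal.one_ne_top)
      simpa using ENNReal.Tendsto.const_mul hdiff (.inr ENNReal.ofNat_ne_top)
    exact tendsto_of_tendsto_of_tendsto_of_le_of_le' tendsto_const_nhds hbound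
      (.of_forall fun _ => zero_le) ((eventually_gt_atTop 0).mono fun r hr =>
        measure_symmDiff_vadd_closedBall_div_le μ t hr)

end ClosedBallFoelner

section ComparableVisits

lemma lintegral_measure_visits {G X : Type*} [MeasurableSpace G] [MeasurableSpace X]
    {φ : G → X → X} (hφ : Measurable fun p : G × X => φ p.1 p.2) {ν : Measure X}
    (hν : IsInvariantProbability φ ν) (μ : Measure G) [SFinite μ] {F : Set G}
    (hF : MeasurableSet F) {U : Set X} (hU : MeasurableSet U) :
    ∫⁻ x, μ {s ∈ F | φ s x ∈ U} ∂ν = ν U * μ F := by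
  have := hν.1
  let visits : Set (G × X) := {p | p.1 ∈ F ∧ φ p.1 p.2 ∈ U}
  have hvisits : MeasurableSet visits := (measurable_fst hF).inter (hφ hU)
  have hslice : ∀ s, ν (Prod.mk s ⁻¹' visits) = F.indicator (fun _ => ν U) s := by
    intro s
    by_cases hs : s ∈ F
    · rw [indicator_of_mem hs]
      calc ν (Prod.mk s ⁻¹' visits) = ν (φ s ⁻¹' U) := by simp [visits, hs, preimage]
        _ = ν U := (hν.measurePreserving (hφ.comp measurable_prodMk_left)).measure_preimage
          hU.nullMeasurableSet
    · simp [visits, hs]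
  calc ∫⁻ x, μ {s ∈ F | φ s x ∈ U} ∂ν = μ.prod ν visits := (Measure.prod_apply_symm hvisits).symm
    _ = ∫⁻ s, F.indicator (fun _ => ν U) s ∂μ := by simp only [Measure.prod_apply hvisits, hslice]
    _ = ν U * μ F := by rw [lintegral_indicator_const hF]

variable {E X : Type*} [NormedAddCommGroup E]

/-- There is a radius `R > 0` such that, up to a translation, the times in the ball of radius `R`
at which one point visits `U` are times in the ball of radius `K * R` at which any other given point
visits `U`.  The constant `K` thus bounds the distortion between the visit frequencies of any two
points. -/
def HasComparableVisits (φ : E → X → X) (K : ℝ) (U : Set X) : Prop :=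
  ∃ R > 0, ∀ x y, ∃ t, ∀ s ∈ closedBall (0 : E) R, φ s x ∈ U →
    s + t ∈ closedBall (0 : E) (K * R) ∧ φ (s + t) y ∈ U

variable [NormedSpace ℝ E] [FiniteDimensional ℝ E] [MeasurableSpace E] [BorelSpace E]

lemma HasComparableVisits.measure_le [MeasurableSpace X] {φ : E → X → X} {K : ℝ} {U : Set X}
    (h : HasComparableVisits φ K U) (hK : 0 ≤ K) (hφ : Measurable fun p : E × X => φ p.1 p.2)
    (hU : MeasurableSet U) {μ ν : Measure X} (hμ : IsInvariantProbability φ μ)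
    (hν : IsInvariantProbability φ ν) :
    ν U ≤ ENNReal.ofReal (K ^ Module.finrank ℝ E) * μ U := by
  have := hμ.1
  have := hν.1
  obtain ⟨R, hR, hvisits⟩ := h
  let vol : Measure E := Measure.addHaar
  have hball : ∀ r : ℝ, MeasurableSet (closedBall (0 : E) r) :=
    fun _ => isClosed_closedBall.measurableSet
  have hcompare : ∀ x y, vol {s ∈ closedBall (0 : E) R | φ s x ∈ U} ≤
      vol {s ∈ closedBall (0 : E) (K * R) | φ s y ∈ U} := by
    intro x y
    obtain ⟨t, ht⟩ := hvisits x y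
    rw [← measure_preimage_add_right vol t {s ∈ closedBall (0 : E) (K * R) | φ s y ∈ U}]
    exact measure_mono fun s hs => ht s hs.1 hs.2
  have hmean : ∀ y, ν U * vol (closedBall (0 : E) R) ≤
      vol {s ∈ closedBall (0 : E) (K * R) | φ s y ∈ U} := by
    intro y
    rw [← lintegral_measure_visits hφ hν vol (hball R) hU]
    simpa using lintegral_mono (μ := ν) fun x => hcompare x y
  have hmeans : ν U * vol (closedBall (0 : E) R) ≤ μ U * vol (closedBall (0 : E) (K * R)) := by
    rw [← lintegral_measure_visits hφ hμ vol (hball (K * R)) hU]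
    simpa using lintegral_mono (μ := μ) hmean
  rw [Measure.addHaar_closedBall_mul _ _ hK hR.le, ← mul_assoc, mul_comm (μ U)] at hmeans
  exact (ENNReal.mul_le_mul_iff_left (measure_closedBall_pos _ _ hR).ne'
    measure_closedBall_lt_top.ne).1 hmeans

end ComparableVisits

section Criterion

variable {X : Type*} [TopologicalSpace X] {B : Set (Set X)}

lemma exists_mem_between_of_isCompact_of_isOpen (hB : TopologicalSpace.IsTopologicalBasis B)
    (hempty : ∅ ∈ B) (hunion : ∀ U ∈ B, ∀ V ∈ B, U ∪ V ∈ B) {K U : Set X} (hK : IsCompact K)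
    (hU : IsOpen U) (hKU : K ⊆ U) : ∃ V ∈ B, K ⊆ V ∧ V ⊆ U := by
  refine hK.induction_on (p := fun K => ∃ V ∈ B, K ⊆ V ∧ V ⊆ U)
    ⟨∅, hempty, subset_rfl, empty_subset U⟩ ?_ ?_ ?_
  · rintro s t hst ⟨V, hV, htV, hVU⟩
    exact ⟨V, hV, hst.trans htV, hVU⟩
  · rintro s t ⟨V, hV, hsV, hVU⟩ ⟨W, hW, htW, hWU⟩
    exact ⟨V ∪ W, hunion V hV W hW, union_subset_union hsV htW, union_subset hVU hWU⟩
  · intro x hx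
    obtain ⟨V, hV, hxV, hVU⟩ := hB.exists_subset_of_mem_open (hKU hx) hU
    exact ⟨V, mem_nhdsWithin_of_mem_nhds (hB.mem_nhds hV hxV), V, hV, subset_rfl, hVU⟩

lemma measure_le_of_forall_isTopologicalBasis_le [MeasurableSpace X]
    (hB : TopologicalSpace.IsTopologicalBasis B) (hempty : ∅ ∈ B)
    (hunion : ∀ U ∈ B, ∀ V ∈ B, U ∪ V ∈ B) {μ ν : Measure X} [μ.OuterRegular] [ν.Regular]
    (hle : ∀ U ∈ B, ν U ≤ μ U) : ν ≤ μ := by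
  refine Measure.le_intro fun s _ _ => ?_
  rw [s.measure_eq_iInf_isOpen μ]
  refine le_iInf₂ fun U hsU => le_iInf fun hU => (measure_mono hsU).trans ?_
  rw [hU.measure_eq_iSup_isCompact]
  refine iSup₂_le fun K hKU => iSup_le fun hK => ?_
  obtain ⟨V, hV, hKV, hVU⟩ :=
    exists_mem_between_of_isCompact_of_isOpen hB hempty hunion hK hU hKU
  exact (measure_mono hKV).trans ((hle V hV).trans (measure_mono hVU))

theorem existsUnique_isInvariantProbability_of_hasComparableVisits {E : Type*}
    [NormedAddCommGroup E] [NormedSpace ℝ E] [FiniteDimensional ℝ E] [T2Space X] [CompactSpace X]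
    [SecondCountableTopology X] [MeasurableSpace X] [BorelSpace X] [Nonempty X] (ϕ : Flow E X)
    (hB : TopologicalSpace.IsTopologicalBasis B) (hempty : ∅ ∈ B)
    (hunion : ∀ U ∈ B, ∀ V ∈ B, U ∪ V ∈ B) {K : ℝ} (hK : 0 ≤ K)
    (hvisits : ∀ U ∈ B, HasComparableVisits ϕ K U) :
    ∃! μ : Measure X, IsInvariantProbability ϕ μ := by
  borelize E
  obtain ⟨μ, hμ⟩ := exists_isInvariantProbability_of_isAddFoelner ϕ
    (isAddFoelner_closedBall (Measure.addHaar (G := E)))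
  refine ⟨μ, hμ, fun ν hν => IsInvariantProbability.eq_of_forall_absolutelyContinuous
    (fun t => (ϕ.continuous_toFun t).measurable) (fun μ ν hμ hν => ?_) hν hμ⟩
  have := hμ.1
  have := hν.1
  let c := ENNReal.ofReal (K ^ Module.finrank ℝ E)
  have : (c • μ).OuterRegular := Measure.OuterRegular.smul μ ENNReal.ofReal_ne_top
  have hle : ν ≤ c • μ := measure_le_of_forall_isTopologicalBasis_le hB hempty hunion fun U hU =>
    (hvisits U hU).measure_le hK ϕ.cont'.measurable (hB.isOpen hU).measurableSet hμ hν
  exact Measure.absolutelyContinuous_of_le_smul hle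

end Criterion

section Translation

variable {d}

lemma patTrans_zero (M : Set (Set (Pt d))) : patTrans d 0 M = M := by
  simp [patTrans]

lemma patTrans_patTrans (s t : Pt d) (M : Set (Set (Pt d))) :
    patTrans d s (patTrans d t M) = patTrans d (t + s) M := by
  simp only [patTrans, image_image, add_assoc]

lemma patTrans_mono (t : Pt d) {M N : Set (Set (Pt d))} (h : M ⊆ N) :
    patTrans d t M ⊆ patTrans d t N :=
  image_mono h

lemma patTrans_neg_patTrans (t : Pt d) (M : Set (Set (Pt d))) :
    patTrans d (-t) (patTrans d t M) = M := by
  rw [patTrans_patTrans, add_neg_cancel, patTrans_zero]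

lemma patTrans_patTrans_neg (t : Pt d) (M : Set (Set (Pt d))) :
    patTrans d t (patTrans d (-t) M) = M := by
  rw [patTrans_patTrans, neg_add_cancel, patTrans_zero]

lemma patTrans_subset_iff (t : Pt d) {M N : Set (Set (Pt d))} :
    patTrans d t M ⊆ N ↔ M ⊆ patTrans d (-t) N := by
  constructor <;> intro h
  · simpa only [patTrans_neg_patTrans] using patTrans_mono (-t) h
  · simpa only [patTrans_patTrans_neg] using patTrans_mono t h

lemma sUnion_patTrans_eq_univ {M : Set (Set (Pt d))} (hM : ⋃₀ M = univ) (t : Pt d) :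
    ⋃₀ patTrans d t M = univ := by
  refine eq_univ_of_forall fun x => ?_
  obtain ⟨m, hm, hx⟩ := hM.symm.subset (mem_univ (x - t))
  exact ⟨_, mem_image_of_mem _ hm, x - t, hx, sub_add_cancel x t⟩

/-- The tiles of `T` that meet the closed ball of radius `R` about the origin.  Unlike in
`patRestrict`, the tiles are kept whole. -/
def patch (T : Set (Set (Pt d))) (R : ℝ) : Set (Set (Pt d)) :=
  {m ∈ T | (m ∩ closedBall 0 R).Nonempty}

lemma patch_subset (T : Set (Set (Pt d))) (R : ℝ) : patch T R ⊆ T :=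
  sep_subset _ _

lemma patch_mono (T : Set (Set (Pt d))) {r R : ℝ} (h : r ≤ R) : patch T r ⊆ patch T R :=
  fun _ hm => ⟨hm.1, hm.2.mono (inter_subset_inter_right _ (closedBall_subset_closedBall h))⟩

lemma patTrans_patch_subset (t : Pt d) (T : Set (Set (Pt d))) (R : ℝ) :
    patTrans d t (patch T R) ⊆ patch (patTrans d t T) (R + ‖t‖) := by
  rintro _ ⟨m, ⟨hm, x, hx, hxR⟩, rfl⟩
  rw [mem_closedBall_zero_iff] at hxR
  exact ⟨mem_image_of_mem _ hm, x + t, mem_image_of_mem _ hx,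
    mem_closedBall_zero_iff.2 (norm_add_le_of_le hxR le_rfl)⟩

lemma patch_patTrans_subset (t : Pt d) (T : Set (Set (Pt d))) (R : ℝ) :
    patch (patTrans d t T) R ⊆ patTrans d t (patch T (R + ‖t‖)) := by
  rw [← neg_neg t, ← patTrans_subset_iff, neg_neg]
  simpa only [patTrans_neg_patTrans, norm_neg] using patTrans_patch_subset (-t) (patTrans d t T) R

lemma patTrans_patch_subset_patch {t : Pt d} {T S : Set (Set (Pt d))} {r R : ℝ}
    (hTS : patTrans d t (patch T r) ⊆ S) (hR : r + ‖t‖ ≤ R) :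
    patTrans d t (patch T r) ⊆ patch S R :=
  fun _ hm => ⟨hTS hm, (patch_mono _ hR (patTrans_patch_subset t T r hm)).2⟩

lemma closedBall_subset_supp_patch {T : Set (Set (Pt d))} (hT : ⋃₀ T = univ) (R : ℝ) :
    closedBall 0 R ⊆ supp d (patch T R) := by
  intro x hx
  obtain ⟨m, hm, hxm⟩ := hT.symm.subset (mem_univ x)
  exact ⟨m, ⟨hm, x, hxm, hx⟩, hxm⟩

lemma supp_patch_subset_closedBall {T : Set (Set (Pt d))} {D : ℝ}
    (hD : ∀ m ∈ T, ∀ x ∈ m, ∀ y ∈ m, dist x y ≤ D) (R : ℝ) :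
    supp d (patch T R) ⊆ closedBall 0 (R + D) := by
  rintro x ⟨m, ⟨hm, y, hy, hyR⟩, hx⟩
  rw [mem_closedBall] at *
  linarith [dist_triangle x y 0, hD m hm x hx y hy]

lemma patRestrict_closedBall_congr_of_le {T S : Set (Set (Pt d))} {r R : ℝ} (hr : r ≤ R)
    (h : patRestrict d T (closedBall 0 R) = patRestrict d S (closedBall 0 R)) :
    patRestrict d T (closedBall 0 r) = patRestrict d S (closedBall 0 r) := by
  have hball : closedBall (0 : Pt d) r ⊆ closedBall 0 R := closedBall_subset_closedBall hr
  have hsub : ∀ T S : Set (Set (Pt d)),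
      patRestrict d T (closedBall 0 R) = patRestrict d S (closedBall 0 R) →
      patRestrict d T (closedBall 0 r) ⊆ patRestrict d S (closedBall 0 r) := by
    rintro T S h _ ⟨m, hm, ⟨p, hpm, hp⟩, rfl⟩
    obtain ⟨m', hm', -, hmm'⟩ := h.subset ⟨m, hm, ⟨p, hpm, interior_mono hball hp⟩, rfl⟩
    have hrestrict : m ∩ closedBall 0 r = m' ∩ closedBall 0 r := by
      rw [← inter_eq_right.2 hball, ← inter_assoc, ← inter_assoc, hmm']
    have hpm' := hrestrict.subset ⟨hpm, interior_subset hp⟩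
    exact ⟨m', hm', ⟨p, hpm'.1, hp⟩, hrestrict⟩
  exact (hsub T S h).antisymm (hsub S T h.symm)

end Translation

section TranslationRigidity

lemma eq_of_image_add_right_eq_of_isCompact {E : Type*} [NormedAddCommGroup E] [NormedSpace ℝ E]
    {m : Set E} (hm : IsCompact m) (hne : m.Nonempty) {v w : E}
    (h : (fun x => x + v) '' m = (fun x => x + w) '' m) : v = w := by
  by_contra hvw
  obtain ⟨f, -, hf⟩ := exists_dual_vector ℝ (v - w) (norm_ne_zero_iff.2 (sub_ne_zero.2 hvw))
  obtain ⟨p, hp, hmax⟩ := hm.exists_isMaxOn hne f.continuous.continuousOn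
  obtain ⟨q, hq, hqp : q + w = p + v⟩ := h.subset (mem_image_of_mem _ hp)
  have hfq : f q ≤ f p := hmax hq
  have hfqp : f q = f p + ‖v - w‖ := by
    rw [eq_sub_of_add_eq hqp, add_sub_assoc, map_add, hf]
    rfl
  linarith [norm_pos_iff.2 (sub_ne_zero.2 hvw)]

variable {d}

lemma finite_setOf_patTrans_subset {M N : Set (Set (Pt d))} (hN : N.Finite) {m : Set (Pt d)}
    (hm : m ∈ M) (hcompact : IsCompact m) (hne : m.Nonempty) :
    {v : Pt d | patTrans d v M ⊆ N}.Finite := by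
  refine Finite.of_finite_image (f := fun v => (fun x => x + v) '' m) (hN.subset ?_)
    fun v _ w _ => eq_of_image_add_right_eq_of_isCompact hcompact hne
  rintro _ ⟨v, hv, rfl⟩
  exact hv (mem_image_of_mem _ hm)

lemma exists_forall_norm_lt_eq_zero_of_patTrans_subset {M N : Set (Set (Pt d))} (hN : N.Finite)
    {m : Set (Pt d)} (hm : m ∈ M) (hcompact : IsCompact m) (hne : m.Nonempty) :
    ∃ δ > 0, ∀ v : Pt d, ‖v‖ < δ → patTrans d v M ⊆ N → v = 0 := by
  have hclosed : IsClosed ({v : Pt d | patTrans d v M ⊆ N} \ {0}) :=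
    (finite_setOf_patTrans_subset hN hm hcompact hne).sdiff.isClosed
  obtain ⟨δ, hδ, hball⟩ := Metric.mem_nhds_iff.1
    (hclosed.isOpen_compl.mem_nhds fun h => h.2 (mem_singleton (0 : Pt d)))
  exact ⟨δ, hδ, fun v hv hsub => of_not_not fun hv0 => hball (mem_ball_zero_iff.2 hv) ⟨hsub, hv0⟩⟩

end TranslationRigidity

section Radii

variable {d}

lemma le_of_closedBall_subset_closedBall {E : Type*} [NormedAddCommGroup E] [NormedSpace ℝ E]
    [Nontrivial E] {x y : E} {r s : ℝ} (hr : 0 ≤ r) (h : closedBall x r ⊆ closedBall y s) :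
    r ≤ s := by
  have hs : 0 ≤ s := nonempty_closedBall.1 ((nonempty_closedBall.2 hr).mono h)
  have hdiam := diam_mono h isBounded_closedBall
  rw [diam_closedBall_eq x hr, diam_closedBall_eq y hs] at hdiam
  linarith

lemma exists_supp_subset_closedBall_of_rOut_lt {M : Set (Set (Pt d))}
    (hM : Bornology.IsBounded (supp d M)) {r : ℝ} (hr : rOut d M < r) :
    ∃ x, supp d M ⊆ closedBall x r := by
  obtain ⟨R, hR⟩ := hM.subset_closedBall 0
  have hne : {r : ℝ | ∃ x : Pt d, supp d M ⊆ closedBall x r}.Nonempty := ⟨R, 0, hR⟩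
  obtain ⟨s, ⟨x, hx⟩, hsr⟩ := exists_lt_of_csInf_lt hne hr
  exact ⟨x, hx.trans (closedBall_subset_closedBall hsr.le)⟩

lemma exists_closedBall_subset_supp_of_lt_rIn {M : Set (Set (Pt d))} {r : ℝ} (hr : r < rIn d M) :
    ∃ x, closedBall x r ⊆ supp d M := by
  have hne : {r : ℝ | ∃ x : Pt d, closedBall x r ⊆ supp d M}.Nonempty :=
    ⟨-1, 0, (closedBall_eq_empty.2 neg_one_lt_zero).trans_subset (empty_subset _)⟩
  obtain ⟨s, ⟨x, hx⟩, hrs⟩ := exists_lt_of_lt_csSup hne hr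
  exact ⟨x, (closedBall_subset_closedBall hrs.le).trans hx⟩

lemma rOut_le_of_supp_subset_closedBall {M : Set (Set (Pt d))} (hM : (supp d M).Nonempty)
    {x : Pt d} {r : ℝ} (h : supp d M ⊆ closedBall x r) : rOut d M ≤ r := by
  refine csInf_le ⟨0, ?_⟩ ⟨x, h⟩
  rintro s ⟨y, hs⟩
  exact nonempty_closedBall.1 (hM.mono hs)

lemma le_rOut_of_closedBall_subset_supp [Nontrivial (Pt d)] {M : Set (Set (Pt d))}
    (hM : Bornology.IsBounded (supp d M)) {x : Pt d} {r : ℝ} (hr : 0 ≤ r)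
    (h : closedBall x r ⊆ supp d M) : r ≤ rOut d M := by
  obtain ⟨R, hR⟩ := hM.subset_closedBall 0
  exact le_csInf ⟨R, 0, hR⟩ fun s ⟨y, hs⟩ => le_of_closedBall_subset_closedBall hr (h.trans hs)

lemma le_rIn_of_closedBall_subset_supp [Nontrivial (Pt d)] {M : Set (Set (Pt d))}
    (hM : Bornology.IsBounded (supp d M)) {x : Pt d} {r : ℝ} (h : closedBall x r ⊆ supp d M) :
    r ≤ rIn d M := by
  obtain ⟨R, hR⟩ := hM.subset_closedBall 0
  refine le_csSup ⟨max R 0, ?_⟩ ⟨x, h⟩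
  rintro s ⟨y, hs⟩
  rcases le_or_gt 0 s with hs0 | hs0
  · exact (le_of_closedBall_subset_closedBall hs0 (hs.trans hR)).trans (le_max_left R 0)
  · exact hs0.le.trans (le_max_right R 0)

lemma dist_le_of_rOut_singleton_lt {m : Set (Pt d)} (hm : Bornology.IsBounded m) {r : ℝ}
    (hr : rOut d {m} < r) {x y : Pt d} (hx : x ∈ m) (hy : y ∈ m) : dist x y ≤ 2 * r := by
  obtain ⟨z, hz⟩ := exists_supp_subset_closedBall_of_rOut_lt
    (hm.subset (sUnion_singleton m).subset) hr
  have hxz : dist x z ≤ r := hz ⟨m, rfl, hx⟩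
  have hyz : dist y z ≤ r := hz ⟨m, rfl, hy⟩
  linarith [dist_triangle_right x y z]

lemma exists_ball_subset_interior_of_lt_rIn_singleton {m : Set (Pt d)} {r : ℝ}
    (hr : r < rIn d {m}) : ∃ x, ball x r ⊆ interior m := by
  obtain ⟨x, hx⟩ := exists_closedBall_subset_supp_of_lt_rIn hr
  rw [supp, sUnion_singleton] at hx
  exact ⟨x, interior_maximal (ball_subset_closedBall.trans hx) isOpen_ball⟩

end Radii

section BoundedGeometry

variable {d}

/-- `T` covers `ℝ^d` by compact connected tiles of diameter at most `D` that have nonempty, pairwise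
disjoint interiors, and only finitely many of them meet any given ball.  These are the only
geometric properties of tilings used to study the topology of a tiling space. -/
structure BoundedGeometry (D : ℝ) (T : Set (Set (Pt d))) : Prop where
  isCompact : ∀ m ∈ T, IsCompact m
  isPreconnected : ∀ m ∈ T, IsPreconnected m
  nonempty_interior : ∀ m ∈ T, (interior m).Nonempty
  dist_le : ∀ m ∈ T, ∀ x ∈ m, ∀ y ∈ m, dist x y ≤ D
  pairwise : T.Pairwise fun m m' => interior m ∩ interior m' = ∅
  sUnion_eq_univ : ⋃₀ T = univ
  finite_patch : ∀ R, (patch T R).Finite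

lemma exists_interior_inter_nonempty_of_subset_sUnion {X : Type*} [TopologicalSpace X]
    {F : Set (Set X)} (hF : F.Finite) (hclosed : ∀ m ∈ F, IsClosed m) {U : Set X} (hU : IsOpen U)
    (hne : U.Nonempty) (hcover : U ⊆ ⋃₀ F) : ∃ m ∈ F, (interior m ∩ U).Nonempty := by
  induction F, hF using Set.Finite.induction_on generalizing U with
  | empty => simp only [sUnion_empty, subset_empty_iff] at hcover; exact absurd hcover hne.ne_empty
  | @insert a F _ _ ih =>
    rw [forall_mem_insert] at hclosed
    rw [sUnion_insert] at hcover
    rcases (U \ a).eq_empty_or_nonempty with hUa | hUa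
    · have hsub : U ⊆ interior a := interior_maximal (sdiff_eq_empty.1 hUa) hU
      exact ⟨a, mem_insert a F, hne.mono fun x hx => ⟨hsub hx, hx⟩⟩
    · obtain ⟨m, hm, x, hx, hxU, -⟩ := ih hclosed.2 (hU.sdiff hclosed.1) hUa
        (sdiff_subset_iff.2 hcover)
      exact ⟨m, mem_insert_of_mem a hm, x, hx, hxU⟩

lemma exists_subset_of_finite_of_subset_iUnion {α : Type*} {L : ℕ → Set α} (hL : Monotone L)
    {F : Set α} (hF : F.Finite) (h : F ⊆ ⋃ n, L n) : ∃ n, F ⊆ L n := by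
  obtain ⟨n, hn⟩ := hL.directed_le.exists_mem_subset_of_finset_subset_biUnion (s := hF.toFinset)
    (by rwa [hF.coe_toFinset])
  exact ⟨n, by rwa [hF.coe_toFinset] at hn⟩

lemma finite_patch_of_forall_exists_ball_subset {T : Set (Set (Pt d))} {D ε : ℝ}
    (hdist : ∀ m ∈ T, ∀ x ∈ m, ∀ y ∈ m, dist x y ≤ D)
    (hpair : T.Pairwise fun m m' => interior m ∩ interior m' = ∅) (hε : 0 < ε)
    (hball : ∀ m ∈ T, ∃ x, ball x ε ⊆ interior m) (R : ℝ) : (patch T R).Finite := by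
  have hbounded : Bornology.IsBounded (⋃ m : patch T R, interior (m : Set (Pt d))) :=
    isBounded_closedBall.subset <| iUnion_subset fun m => interior_subset.trans <|
      (subset_sUnion_of_mem m.2).trans (supp_patch_subset_closedBall hdist R)
  have hfinite := Measure.finite_const_le_meas_of_disjoint_iUnion volume
    (measure_ball_pos volume (0 : Pt d) hε)
    (As := fun m : patch T R => interior (m : Set (Pt d)))
    (fun _ => isOpen_interior.measurableSet)
    (fun m m' hmm' => disjoint_iff_inter_eq_empty.2
      (hpair m.2.1 m'.2.1 (Subtype.coe_ne_coe.2 hmm')))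
    hbounded.measure_lt_top.ne
  refine finite_coe_iff.1 (finite_univ_iff.1 (hfinite.subset fun m _ => ?_))
  obtain ⟨x, hx⟩ := hball m m.2.1
  rw [mem_ofPred_eq, ← Measure.addHaar_ball_center volume x]
  exact measure_mono hx

namespace BoundedGeometry

variable {D : ℝ} {T S : Set (Set (Pt d))}

lemma nonempty_tile (hT : BoundedGeometry D T) {m : Set (Pt d)} (hm : m ∈ T) : m.Nonempty :=
  (hT.nonempty_interior m hm).mono interior_subset

lemma nonneg (hT : BoundedGeometry D T) : 0 ≤ D := by
  obtain ⟨m, hm, hx⟩ := hT.sUnion_eq_univ.symm.subset (mem_univ 0)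
  simpa only [dist_self] using hT.dist_le m hm 0 hx 0 hx

lemma tile_subset_closedBall (hT : BoundedGeometry D T) {R : ℝ} {m : Set (Pt d)}
    (hm : m ∈ patch T R) : m ⊆ closedBall 0 (R + D) :=
  (subset_sUnion_of_mem hm).trans (supp_patch_subset_closedBall hT.dist_le R)

lemma exists_subset_patch (hT : BoundedGeometry D T) {F : Set (Set (Pt d))} (hF : F.Finite)
    (hFT : F ⊆ T) : ∃ R, F ⊆ patch T R := by
  have hmono : Monotone fun n : ℕ => patch T n := fun _ _ h => patch_mono T (Nat.cast_le.2 h)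
  obtain ⟨n, hn⟩ := exists_subset_of_finite_of_subset_iUnion hmono hF fun m hm => by
    obtain ⟨p, hp⟩ := hT.nonempty_tile (hFT hm)
    obtain ⟨n, hpn⟩ := exists_nat_ge ‖p‖
    exact mem_iUnion.2 ⟨n, hFT hm, p, hp, mem_closedBall_zero_iff.2 hpn⟩
  exact ⟨n, hn⟩

lemma countable (hT : BoundedGeometry D T) : T.Countable := by
  refine (countable_iUnion fun n : ℕ => (hT.finite_patch n).countable).mono fun m hm => ?_
  obtain ⟨R, hR⟩ := hT.exists_subset_patch (finite_singleton m) (singleton_subset_iff.2 hm)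
  obtain ⟨n, hn⟩ := exists_nat_ge R
  exact mem_iUnion.2 ⟨n, patch_mono T hn (hR rfl)⟩

/-- A tile of `S` in the smaller patch overlaps the interior of a tile of `T` in the larger one,
which is also a tile of `S`; disjointness of interiors in `S` makes the two coincide. -/
lemma patch_subset_of_patch_subset (hT : BoundedGeometry D T) (hS : BoundedGeometry D S) {R : ℝ}
    (h : patch T (R + D) ⊆ S) : patch S R ⊆ T := by
  intro m hm
  obtain ⟨m', hm', hmm'⟩ := exists_interior_inter_nonempty_of_subset_sUnion
    (hT.finite_patch (R + D)) (fun m' hm' => (hT.isCompact m' hm'.1).isClosed) isOpen_interior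
    (hS.nonempty_interior m hm.1) ((interior_subset.trans (hS.tile_subset_closedBall hm)).trans
      (closedBall_subset_supp_patch hT.sUnion_eq_univ _))
  have heq : m' = m := hS.pairwise.eq (h hm') hm.1 hmm'.ne_empty
  exact heq ▸ hm'.1

lemma patRestrict_eq_of_patch_subset (hT : BoundedGeometry D T) (hS : BoundedGeometry D S) {R : ℝ}
    (h : patch T (R + D) ⊆ S) :
    patRestrict d T (closedBall 0 R) = patRestrict d S (closedBall 0 R) := by
  have hTS : patch T R ⊆ S := (patch_mono T (le_add_of_nonneg_right hT.nonneg)).trans h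
  have hST : patch S R ⊆ T := hT.patch_subset_of_patch_subset hS h
  have hpatch : ∀ {m : Set (Pt d)}, (m ∩ interior (closedBall 0 R)).Nonempty →
      (m ∩ closedBall 0 R).Nonempty :=
    fun hm => hm.mono (inter_subset_inter_right _ interior_subset)
  ext s
  constructor <;> rintro ⟨m, hm, hne, rfl⟩
  · exact ⟨m, hTS ⟨hm, hpatch hne⟩, hne, rfl⟩
  · exact ⟨m, hST ⟨hm, hpatch hne⟩, hne, rfl⟩

/-- The trace on the ball of a connected set cannot stay away from the boundary sphere unless the
set lies inside the ball, so a tile in the patch can be recognised in the restriction. -/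
lemma patch_subset_of_patRestrict_eq (hT : BoundedGeometry D T) (hS : BoundedGeometry D S)
    {R r : ℝ} (hr : R + D < r)
    (h : patRestrict d T (closedBall 0 r) = patRestrict d S (closedBall 0 r)) :
    patch T R ⊆ S := by
  intro m hm
  have hmball : m ⊆ ball 0 r := (hT.tile_subset_closedBall hm).trans (closedBall_subset_ball hr)
  have hmtrace : m ∩ closedBall 0 r = m := inter_eq_left.2 (hmball.trans ball_subset_closedBall)
  obtain ⟨p, hp⟩ := hT.nonempty_tile hm.1
  obtain ⟨m', hm', -, hmm'⟩ := h.subset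
    ⟨m, hm.1, ⟨p, hp, ball_subset_interior_closedBall (hmball hp)⟩, hmtrace.symm⟩
  have hm'ball : m' ⊆ ball 0 r := by
    refine (hS.isPreconnected m' hm').subset_left_of_subset_union isOpen_ball
      isClosed_closedBall.isOpen_compl
      (disjoint_compl_right_iff_subset.2 ball_subset_closedBall) (fun x hx => ?_)
      ⟨p, (hmm'.subset hp).1, hmball hp⟩
    by_cases hxr : x ∈ closedBall 0 r
    · exact Or.inl (hmball (hmm'.symm.subset ⟨hx, hxr⟩))
    · exact Or.inr hxr
  rwa [hmm', inter_eq_left.2 (hm'ball.trans ball_subset_closedBall)]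

end BoundedGeometry

end BoundedGeometry

section AdmissibleTilings

variable {d} {Ps : Set (Set (Set (Pt d)))}

lemma IsTile.isCompact {m : Set (Pt d)} (hm : IsTile d m) : IsCompact m := by
  obtain ⟨e⟩ := hm
  have : CompactSpace (closedBall (0 : Pt d) 1) :=
    isCompact_iff_compactSpace.1 (isCompact_closedBall 0 1)
  exact isCompact_iff_compactSpace.2 e.symm.compactSpace

lemma IsTile.isPreconnected {m : Set (Pt d)} (hm : IsTile d m) : IsPreconnected m := by
  obtain ⟨e⟩ := hm
  have : PreconnectedSpace (closedBall (0 : Pt d) 1) :=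
    isPreconnected_iff_preconnectedSpace.1 (convex_closedBall 0 1).isPreconnected
  exact isPreconnected_iff_preconnectedSpace.2
    (e.symm.surjective.denseRange.preconnectedSpace e.symm.continuous)

lemma IsTile.nonempty {m : Set (Pt d)} (hm : IsTile d m) : m.Nonempty := by
  obtain ⟨e⟩ := hm
  exact ⟨_, (e.symm ⟨0, mem_closedBall_self zero_le_one⟩).2⟩

lemma IsPattern.subset {P Q : Set (Set (Pt d))} (hP : IsPattern d P) (hQ : Q.Nonempty)
    (hQP : Q ⊆ P) : IsPattern d Q :=
  ⟨hP.1.subset hQP, hQ, fun m hm => hP.2.2.1 m (hQP hm), hP.2.2.2.mono hQP⟩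

lemma Admissible.mem_of_subset (h : Admissible d Ps) {P Q : Set (Set (Pt d))} (hP : P ∈ Ps)
    (hQ : Q.Nonempty) (hQP : Q ⊆ P) : Q ∈ Ps :=
  h.subClosed P hP Q ((h.pattern P hP).subset hQ hQP) hQP

lemma mem_of_finite_of_subset_of_mem_tilingsOf {T M : Set (Set (Pt d))} (hT : T ∈ TilingsOf d Ps)
    (hfin : M.Finite) (hne : M.Nonempty) (hMT : M ⊆ T) : M ∈ Ps :=
  hT.2 M ⟨hfin, hne, fun m hm => hT.1.1 m (hMT hm), hT.1.2.1.mono hMT⟩ hMT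

lemma singleton_mem_of_mem_tilingsOf {T : Set (Set (Pt d))} (hT : T ∈ TilingsOf d Ps)
    {m : Set (Pt d)} (hm : m ∈ T) : {m} ∈ Ps :=
  mem_of_finite_of_subset_of_mem_tilingsOf hT (finite_singleton m) (singleton_nonempty m)
    (singleton_subset_iff.2 hm)

lemma Admissible.mem_tilingsOf (h : Admissible d Ps) {T : Set (Set (Pt d))}
    (hcover : ⋃₀ T = univ) (hmem : ∀ M ⊆ T, M.Finite → M.Nonempty → M ∈ Ps) :
    T ∈ TilingsOf d Ps := by
  refine ⟨⟨fun m hm => ?_, fun m hm m' hm' hne => ?_, hcover⟩,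
    fun M hM hMT => hmem M hMT hM.1 hM.2.1⟩
  · exact (h.pattern {m} (hmem {m} (singleton_subset_iff.2 hm) (finite_singleton m)
      (singleton_nonempty m))).2.2.1 m (mem_singleton m)
  · exact (h.pattern {m, m'} (hmem {m, m'} (pair_subset hm hm') (toFinite _)
      (insert_nonempty _ _))).2.2.2 (mem_insert m {m'}) (mem_insert_of_mem m rfl) hne

lemma Admissible.iUnion_mem_tilingsOf (h : Admissible d Ps) {L : ℕ → Set (Set (Pt d))}
    (hL : Monotone L) (hmem : ∀ n, ∀ M ⊆ L n, M.Finite → M.Nonempty → M ∈ Ps)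
    (hcover : ∀ n : ℕ, closedBall (0 : Pt d) n ⊆ ⋃₀ L n) : ⋃ n, L n ∈ TilingsOf d Ps := by
  refine h.mem_tilingsOf (eq_univ_of_forall fun x => ?_) fun M hM hfin hne => ?_
  · obtain ⟨n, hn⟩ := exists_nat_ge ‖x‖
    obtain ⟨m, hm, hx⟩ := hcover n (mem_closedBall_zero_iff.2 hn)
    exact ⟨m, mem_iUnion.2 ⟨n, hm⟩, hx⟩
  · obtain ⟨n, hn⟩ := exists_subset_of_finite_of_subset_iUnion hL hfin hM
    exact hmem n M hn hfin hne

lemma Admissible.mem_of_patTrans_subset (h : Admissible d Ps) {T M : Set (Set (Pt d))}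
    (hT : T ∈ TilingsOf d Ps) {t : Pt d} (hMT : patTrans d t M ⊆ T) (hfin : M.Finite)
    (hne : M.Nonempty) : M ∈ Ps := by
  have hmem := mem_of_finite_of_subset_of_mem_tilingsOf hT (hfin.image _) (hne.image _) hMT
  exact patTrans_neg_patTrans t M ▸ h.transClosed (-t) (patTrans d t M) hmem

lemma Admissible.patTrans_mem_tilingsOf (h : Admissible d Ps) {T : Set (Set (Pt d))}
    (hT : T ∈ TilingsOf d Ps) (t : Pt d) : patTrans d t T ∈ TilingsOf d Ps :=
  h.mem_tilingsOf (sUnion_patTrans_eq_univ hT.1.2.2 t) fun _ hM =>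
    h.mem_of_patTrans_subset hT (by rwa [patTrans_subset_iff, neg_neg])

lemma Admissible.exists_monotone_seq (h : Admissible d Ps) {P : Set (Set (Pt d))} (hP : P ∈ Ps)
    (h0 : (0 : Pt d) ∈ supp d P) : ∃ L : ℕ → Set (Set (Pt d)), Monotone L ∧ (∀ n, L n ∈ Ps) ∧
      ∀ n : ℕ, closedBall (0 : Pt d) n ⊆ supp d (L n) := by
  let Centered := {Q : Set (Set (Pt d)) // Q ∈ Ps ∧ (0 : Pt d) ∈ supp d Q}
  have hextend : ∀ (n : ℕ) (Q : Centered),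
      ∃ Q' : Centered, Q.1 ⊆ Q'.1 ∧ closedBall (0 : Pt d) (n + 1) ⊆ supp d Q'.1 := by
    rintro n ⟨Q, hQ, hQ0⟩
    have hn : (0 : ℝ) < n + 1 := by positivity
    obtain ⟨Q', hQ', hsub, hball⟩ := h.extend Q hQ hQ0 (n + 1) hn
    exact ⟨⟨Q', hQ', hball (mem_closedBall_self hn.le)⟩, hsub, hball⟩
  choose next hsub hball using hextend
  let L : ℕ → Centered := fun n => Nat.rec ⟨P, hP, h0⟩ next n
  refine ⟨fun n => (L n).1, monotone_nat_of_le_succ fun n => hsub n (L n), fun n => (L n).2.1, ?_⟩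
  rintro (_ | n)
  · rw [Nat.cast_zero, closedBall_zero, singleton_subset_iff]
    exact h0
  · exact_mod_cast hball n (L n)

lemma Admissible.nonempty_tilingsOf (h : Admissible d Ps) (hne : Ps.Nonempty) :
    (TilingsOf d Ps).Nonempty := by
  obtain ⟨P, hP⟩ := hne
  obtain ⟨m, hm⟩ := (h.pattern P hP).2.1
  obtain ⟨p, hp⟩ := ((h.pattern P hP).2.2.1 m hm).nonempty
  have h0 : (0 : Pt d) ∈ supp d (patTrans d (-p) P) :=
    ⟨_, mem_image_of_mem _ hm, p, hp, add_neg_cancel p⟩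
  obtain ⟨L, hL, hmem, hcover⟩ := h.exists_monotone_seq (h.transClosed (-p) P hP) h0
  exact ⟨_, h.iUnion_mem_tilingsOf hL (fun n _ hM _ hne => h.mem_of_subset (hmem n) hne hM) hcover⟩

lemma rIn_eq_zero_of_subsingleton [Subsingleton (Pt d)] {M : Set (Set (Pt d))}
    (hM : (supp d M).Nonempty) : rIn d M = 0 := by
  have hradii : {r : ℝ | ∃ x : Pt d, closedBall x r ⊆ supp d M} = univ :=
    eq_univ_of_forall fun r => ⟨0, fun x _ => Subsingleton.mem_iff_nonempty.2 hM⟩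
  rw [rIn, hradii, Real.sSup_univ]

/-- In dimension `0` every real is the radius of a ball inside a tile, so the junk value `0` of the
supremum contradicts the lower bound on inner radii. -/
lemma Admissible.nontrivial (h : Admissible d Ps) (hne : Ps.Nonempty) : Nontrivial (Pt d) := by
  by_contra htrivial
  rw [not_nontrivial_iff_subsingleton] at htrivial
  obtain ⟨P, hP⟩ := hne
  obtain ⟨m, hm⟩ := (h.pattern P hP).2.1
  obtain ⟨p, hp⟩ := ((h.pattern P hP).2.2.1 m hm).nonempty
  obtain ⟨rmin, rmax, hrmin, -, hbounds⟩ := h.tileBounds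
  have hle : rmin ≤ rIn d {m} := (hbounds m
    (h.mem_of_subset hP (singleton_nonempty m) (singleton_subset_iff.2 hm))).1
  rw [rIn_eq_zero_of_subsingleton ⟨p, mem_sUnion_of_mem hp (mem_singleton m)⟩] at hle
  exact hle.not_gt hrmin

lemma Admissible.exists_boundedGeometry (h : Admissible d Ps) :
    ∃ D, ∀ T ∈ TilingsOf d Ps, BoundedGeometry D T := by
  obtain ⟨rmin, rmax, hrmin, -, hbounds⟩ := h.tileBounds
  refine ⟨2 * (rmax + 1), fun T hT => ?_⟩
  have hradii : ∀ m ∈ T, rmin / 2 < rIn d {m} ∧ rOut d {m} < rmax + 1 := fun m hm => by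
    obtain ⟨hin, -, hout⟩ := hbounds m (singleton_mem_of_mem_tilingsOf hT hm)
    constructor <;> linarith
  have hdist : ∀ m ∈ T, ∀ x ∈ m, ∀ y ∈ m, dist x y ≤ 2 * (rmax + 1) := fun m hm x hx y hy =>
    dist_le_of_rOut_singleton_lt (hT.1.1 m hm).isCompact.isBounded (hradii m hm).2 hx hy
  have hball : ∀ m ∈ T, ∃ x, ball x (rmin / 2) ⊆ interior m := fun m hm =>
    exists_ball_subset_interior_of_lt_rIn_singleton (hradii m hm).1
  exact
    { isCompact := fun m hm => (hT.1.1 m hm).isCompact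
      isPreconnected := fun m hm => (hT.1.1 m hm).isPreconnected
      nonempty_interior := fun m hm =>
        let ⟨x, hx⟩ := hball m hm
        ⟨x, hx (mem_ball_self (half_pos hrmin))⟩
      dist_le := hdist
      pairwise := hT.1.2.1
      sUnion_eq_univ := hT.1.2.2
      finite_patch := finite_patch_of_forall_exists_ball_subset hdist hT.1.2.1 (half_pos hrmin)
        hball }

variable {D : ℝ} {T S : Set (Set (Pt d))}

lemma BoundedGeometry.zero_mem_supp_patch (hT : BoundedGeometry D T) {R : ℝ} (hR : 0 ≤ R) :
    (0 : Pt d) ∈ supp d (patch T R) :=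
  closedBall_subset_supp_patch hT.sUnion_eq_univ R (mem_closedBall_self hR)

lemma BoundedGeometry.isBounded_supp_patch (hT : BoundedGeometry D T) (R : ℝ) :
    Bornology.IsBounded (supp d (patch T R)) :=
  isBounded_closedBall.subset (supp_patch_subset_closedBall hT.dist_le R)

lemma BoundedGeometry.patch_mem (hT : BoundedGeometry D T) (hTPs : T ∈ TilingsOf d Ps) {R : ℝ}
    (hR : 0 ≤ R) : patch T R ∈ Ps := by
  obtain ⟨m, hm, -⟩ := hT.zero_mem_supp_patch hR
  exact mem_of_finite_of_subset_of_mem_tilingsOf hTPs (hT.finite_patch R) ⟨m, hm⟩ (patch_subset T R)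

/-- Linear repetitivity places a translate of `patch T R`, whose outer radius is at most `R + D`,
inside the patch of `S` of radius `c * (R + D)`. -/
lemma exists_patTrans_patch_subset [Nontrivial (Pt d)] {c : ℝ} (hc : 0 < c)
    (hlr : ∀ P ∈ Ps, 1 ≤ rOut d P → ∀ Q ∈ Ps, c * rOut d P ≤ rIn d Q → SubpatternClass d P Q)
    (hT : BoundedGeometry D T) (hTPs : T ∈ TilingsOf d Ps) (hS : BoundedGeometry D S)
    (hSPs : S ∈ TilingsOf d Ps) {R : ℝ} (hR : 1 ≤ R) :
    ∃ t, ‖t‖ ≤ c * (R + D) + D ∧ patTrans d t (patch T R) ⊆ S := by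
  have hD := hT.nonneg
  have hR0 : 0 ≤ R := zero_le_one.trans hR
  have hcRD : 0 ≤ c * (R + D) := by positivity
  have hRout : R ≤ rOut d (patch T R) := le_rOut_of_closedBall_subset_supp
    (hT.isBounded_supp_patch R) hR0 (closedBall_subset_supp_patch hT.sUnion_eq_univ R)
  have houtD : rOut d (patch T R) ≤ R + D := rOut_le_of_supp_subset_closedBall
    ⟨0, hT.zero_mem_supp_patch hR0⟩ (supp_patch_subset_closedBall hT.dist_le R)
  have hin : c * (R + D) ≤ rIn d (patch S (c * (R + D))) := le_rIn_of_closedBall_subset_supp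
    (hS.isBounded_supp_patch _) (closedBall_subset_supp_patch hS.sUnion_eq_univ _)
  obtain ⟨t, ht⟩ := hlr _ (hT.patch_mem hTPs hR0) (hR.trans hRout) _ (hS.patch_mem hSPs hcRD)
    ((mul_le_mul_of_nonneg_left houtD hc.le).trans hin)
  obtain ⟨m, hm, h0⟩ := hT.zero_mem_supp_patch hR0
  have htS : t ∈ supp d (patch S (c * (R + D))) :=
    ⟨_, ht (mem_image_of_mem _ hm), 0, h0, zero_add t⟩
  exact ⟨t, mem_closedBall_zero_iff.1 (supp_patch_subset_closedBall hS.dist_le _ htS),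
    ht.trans (patch_subset S _)⟩

/-- A translation-invariant family `𝓣` of tilings of bounded geometry that contains the unions of
growing patches of its members and is linearly repetitive with constant `C`: every patch of radius
`R ≥ 1` of one member occurs in every other member after a translation by at most `C * R`. -/
structure IsLinearlyRepetitiveHull (𝓣 : Set (Set (Set (Pt d)))) (D C : ℝ) : Prop where
  nonempty : 𝓣.Nonempty
  boundedGeometry : ∀ T ∈ 𝓣, BoundedGeometry D T
  patTrans_mem : ∀ T ∈ 𝓣, ∀ t, patTrans d t T ∈ 𝓣
  iUnion_mem : ∀ L : ℕ → Set (Set (Pt d)), Monotone L →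
    (∀ n, ∃ T ∈ 𝓣, ∃ t, patTrans d t (L n) ⊆ T) →
    (∀ n : ℕ, closedBall (0 : Pt d) n ⊆ ⋃₀ L n) → ⋃ n, L n ∈ 𝓣
  exists_patTrans_patch_subset : ∀ R : ℝ, 1 ≤ R → ∀ T ∈ 𝓣, ∀ S ∈ 𝓣,
    ∃ t, ‖t‖ ≤ C * R ∧ patTrans d t (patch T R) ⊆ S

theorem Admissible.exists_isLinearlyRepetitiveHull (h : Admissible d Ps) (hne : Ps.Nonempty)
    (hlr : LinearlyRepetitive d Ps) : ∃ D C, IsLinearlyRepetitiveHull (TilingsOf d Ps) D C := by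
  have := h.nontrivial hne
  obtain ⟨D, hgeom⟩ := h.exists_boundedGeometry
  obtain ⟨c, hc, hlr⟩ := hlr
  refine ⟨D, c * (1 + D) + D, h.nonempty_tilingsOf hne, hgeom,
    fun T hT => h.patTrans_mem_tilingsOf hT, fun L hL hsub hcover => ?_, fun R hR T hT S hS => ?_⟩
  · refine h.iUnion_mem_tilingsOf hL (fun n M hM hfin hne => ?_) hcover
    obtain ⟨T, hT, t, ht⟩ := hsub n
    exact h.mem_of_patTrans_subset hT ((patTrans_mono t hM).trans ht) hfin hne
  · obtain ⟨t, ht, hsub⟩ :=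
      exists_patTrans_patch_subset hc hlr (hgeom T hT) hT (hgeom S hS) hS hR
    have hD := (hgeom T hT).nonneg
    refine ⟨t, ht.trans ?_, hsub⟩
    nlinarith [mul_nonneg (mul_nonneg hc.le hD) (sub_nonneg.2 hR), mul_nonneg hD (sub_nonneg.2 hR)]

lemma IsLinearlyRepetitiveHull.constant_nonneg {𝓣 : Set (Set (Set (Pt d)))} {C : ℝ}
    (h : IsLinearlyRepetitiveHull 𝓣 D C) : 0 ≤ C := by
  obtain ⟨T, hT⟩ := h.nonempty
  obtain ⟨t, ht, -⟩ := h.exists_patTrans_patch_subset 1 le_rfl T hT T hT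
  simpa only [mul_one] using (norm_nonneg t).trans ht

end AdmissibleTilings

section TilingSpace

variable {d} {Ps : Set (Set (Set (Pt d)))} {D C : ℝ}

attribute [local instance] omegaTop

/-- The tilings that contain a translate of `P` by some vector of `V`. -/
def tilingCylinder (P : Set (Set (Pt d))) (V : Set (Pt d)) : Set (Omega d Ps) :=
  {S | ∃ u ∈ V, patTrans d u P ⊆ S.1}

lemma tilingCylinder_mono {P Q : Set (Set (Pt d))} {V W : Set (Pt d)} (hPQ : P ⊆ Q)
    (hVW : V ⊆ W) : (tilingCylinder Q V : Set (Omega d Ps)) ⊆ tilingCylinder P W :=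
  fun _ ⟨u, hu, hS⟩ => ⟨u, hVW hu, (patTrans_mono u hPQ).trans hS⟩

lemma isBasis_tilingCylinder_patch (T : Omega d Ps) :
    IsBasis (fun p : ℝ × ℝ => 0 < p.2)
      fun p => (tilingCylinder (patch T.1 p.1) (ball 0 p.2) : Set (Omega d Ps)) where
  nonempty := ⟨(0, 1), one_pos⟩
  inter {p q} hp hq := by
    refine ⟨(max p.1 q.1, min p.2 q.2), lt_min hp hq, subset_inter ?_ ?_⟩
    · exact tilingCylinder_mono (patch_mono T.1 (le_max_left _ _))
        (ball_subset_ball (min_le_left _ _))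
    · exact tilingCylinder_mono (patch_mono T.1 (le_max_right _ _))
        (ball_subset_ball (min_le_right _ _))

namespace IsLinearlyRepetitiveHull

lemma tdist_lt_iff (h : IsLinearlyRepetitiveHull (TilingsOf d Ps) D C) {T S : Set (Set (Pt d))}
    (hT : T ∈ TilingsOf d Ps) (hS : S ∈ TilingsOf d Ps) {ε : ℝ} :
    tdist d T S < ε ↔ ∃ ε', (0 < ε' ∧ ∃ t : Pt d, ‖t‖ ≤ ε' ∧
      patRestrict d T (closedBall 0 (1 / ε')) = patRestrict d (patTrans d t S)
        (closedBall 0 (1 / ε'))) ∧ ε' < ε := by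
  refine csInf_lt_iff ⟨0, fun ε' hε' => hε'.1.le⟩ ?_
  have hTgeom := h.boundedGeometry T hT
  obtain ⟨t, -, ht⟩ := h.exists_patTrans_patch_subset (1 + D)
    (le_add_of_nonneg_right hTgeom.nonneg) T hT S hS
  refine ⟨max 1 ‖t‖, by positivity, -t, (norm_neg t).trans_le (le_max_right 1 ‖t‖),
    patRestrict_closedBall_congr_of_le (R := 1) ?_ ?_⟩
  · exact div_le_one_of_le₀ (le_max_left 1 ‖t‖) (by positivity)
  · exact hTgeom.patRestrict_eq_of_patch_subset (h.boundedGeometry _ (h.patTrans_mem S hS (-t)))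
      ((patTrans_subset_iff t).1 ht)

lemma exists_tilingCylinder_subset_setOf_tdist_lt
    (h : IsLinearlyRepetitiveHull (TilingsOf d Ps) D C) {T₀ T : Omega d Ps} {ε : ℝ}
    (hT : tdist d T₀.1 T.1 < ε) :
    ∃ R, ∃ δ > 0, tilingCylinder (patch T.1 R) (ball 0 δ) ⊆
      {S : Omega d Ps | tdist d T₀.1 S.1 < ε} := by
  obtain ⟨ε', ⟨hε', t, ht, heq⟩, hε'ε⟩ := (h.tdist_lt_iff T₀.2 T.2).1 hT
  refine ⟨1 / ε' + D + ‖t‖, (ε - ε') / 2, by linarith, ?_⟩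
  rintro S ⟨u, hu, hS⟩
  rw [mem_ball_zero_iff] at hu
  have hu0 := norm_nonneg u
  have hagree : patch (patTrans d t T.1) (1 / ε' + D) ⊆ patTrans d (t - u) S.1 := by
    refine (patch_patTrans_subset t T.1 _).trans ?_
    rw [sub_eq_neg_add, ← patTrans_patTrans]
    exact patTrans_mono t ((patTrans_subset_iff u).1 hS)
  refine (h.tdist_lt_iff T₀.2 S.2).2
    ⟨ε' + ‖u‖, ⟨by positivity, t - u, norm_sub_le_of_le ht le_rfl, ?_⟩, by linarith⟩
  refine patRestrict_closedBall_congr_of_le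
    (one_div_le_one_div_of_le hε' (le_add_of_nonneg_right hu0)) (heq.trans ?_)
  exact (h.boundedGeometry _ (h.patTrans_mem T.1 T.2 t)).patRestrict_eq_of_patch_subset
    (h.boundedGeometry _ (h.patTrans_mem S.1 S.2 (t - u))) hagree

lemma exists_setOf_tdist_lt_subset_tilingCylinder
    (h : IsLinearlyRepetitiveHull (TilingsOf d Ps) D C) (T : Omega d Ps) (R : ℝ) {δ : ℝ}
    (hδ : 0 < δ) :
    ∃ ε > 0, {S : Omega d Ps | tdist d T.1 S.1 < ε} ⊆
      tilingCylinder (patch T.1 R) (ball 0 δ) := by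
  have hT := h.boundedGeometry T.1 T.2
  have hR : 0 < |R| + D + 1 := by linarith [abs_nonneg R, hT.nonneg]
  refine ⟨min δ (1 / (|R| + D + 1)), lt_min hδ (one_div_pos.2 hR), fun S hS => ?_⟩
  obtain ⟨ε, ⟨hε, t, ht, heq⟩, hlt⟩ := (h.tdist_lt_iff T.2 S.2).1 hS
  refine ⟨-t, ?_, ?_⟩
  · rw [mem_ball_zero_iff, norm_neg]
    exact ht.trans_lt (hlt.trans_le (min_le_left _ _))
  · rw [patTrans_subset_iff, neg_neg]
    have hradius : |R| + D + 1 < 1 / ε := (lt_one_div hR hε).2 (hlt.trans_le (min_le_right _ _))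
    exact hT.patch_subset_of_patRestrict_eq (h.boundedGeometry _ (h.patTrans_mem S.1 S.2 t))
      (by linarith [le_abs_self R]) heq

lemma hasBasis_nhds (h : IsLinearlyRepetitiveHull (TilingsOf d Ps) D C) (T : Omega d Ps) :
    (𝓝 T).HasBasis (fun p : ℝ × ℝ => 0 < p.2)
      fun p => tilingCylinder (patch T.1 p.1) (ball 0 p.2) := by
  have hbasis := isBasis_tilingCylinder_patch T
  suffices hnhds : 𝓝 T = hbasis.filter from hnhds ▸ hbasis.hasBasis
  refine le_antisymm (hbasis.hasBasis.ge_iff.2 fun p hp => ?_) ?_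
  · obtain ⟨ε, hε, hsub⟩ := h.exists_setOf_tdist_lt_subset_tilingCylinder T p.1 hp
    have hopen : IsOpen {S : Omega d Ps | tdist d T.1 S.1 < ε} :=
      TopologicalSpace.isOpen_generateFrom_of_mem ⟨T, ε, hε, rfl⟩
    refine mem_of_superset (hopen.mem_nhds ((h.tdist_lt_iff T.2 T.2).2 ?_)) hsub
    exact ⟨ε / 2, ⟨half_pos hε, 0, norm_zero.trans_le (half_pos hε).le, by rw [patTrans_zero]⟩,
      half_lt_self hε⟩
  · refine (le_iInf₂ fun U hU => le_principal_iff.2 ?_).trans_eq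
      TopologicalSpace.nhds_generateFrom.symm
    obtain ⟨hTU, T₀, ε, -, rfl⟩ := hU
    obtain ⟨R, δ, hδ, hsub⟩ := h.exists_tilingCylinder_subset_setOf_tdist_lt hTU
    exact hbasis.hasBasis.mem_iff.2 ⟨(R, δ), hδ, hsub⟩

lemma tilingCylinder_patch_mem_nhds (h : IsLinearlyRepetitiveHull (TilingsOf d Ps) D C)
    (T : Omega d Ps) (R : ℝ) {δ : ℝ} (hδ : 0 < δ) :
    tilingCylinder (patch T.1 R) (ball 0 δ) ∈ 𝓝 T :=
  (h.hasBasis_nhds T).mem_of_mem (i := (R, δ)) hδ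

lemma isOpen_tilingCylinder (h : IsLinearlyRepetitiveHull (TilingsOf d Ps) D C)
    {P : Set (Set (Pt d))} (hP : P.Finite) {V : Set (Pt d)} (hV : IsOpen V) :
    IsOpen (tilingCylinder P V : Set (Omega d Ps)) := by
  refine isOpen_iff_mem_nhds.2 fun S ⟨u, hu, hPS⟩ => ?_
  obtain ⟨R, hR⟩ := (h.boundedGeometry S.1 S.2).exists_subset_patch (hP.image _) hPS
  obtain ⟨δ, hδ, hball⟩ := Metric.isOpen_iff.1 hV u hu
  refine mem_of_superset (h.tilingCylinder_patch_mem_nhds S R hδ) ?_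
  rintro S' ⟨v, hv, hS'⟩
  refine ⟨u + v, hball (by simpa [mem_ball_iff_norm] using hv), ?_⟩
  rw [← patTrans_patTrans]
  exact (patTrans_mono v hR).trans hS'

/-- A tiling near both `T` and `S` contains their large patches up to small translations, so a patch
of `T` occurs in `S` after a small translation, which has to be zero. -/
lemma subset_of_neBot_nhds_inf_nhds (h : IsLinearlyRepetitiveHull (TilingsOf d Ps) D C)
    {T S : Omega d Ps} (hTS : (𝓝 T ⊓ 𝓝 S).NeBot) : T.1 ⊆ S.1 := by
  intro m hm
  have hT := h.boundedGeometry T.1 T.2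
  have hS := h.boundedGeometry S.1 S.2
  obtain ⟨R, hR⟩ := hT.exists_subset_patch (finite_singleton m) (singleton_subset_iff.2 hm)
  have hmR : m ∈ patch T.1 R := hR rfl
  obtain ⟨δ, hδ, hrigid⟩ := exists_forall_norm_lt_eq_zero_of_patTrans_subset
    (hS.finite_patch (R + 2)) hmR (hT.isCompact m hm) (hT.nonempty_tile hm)
  have hδ' : 0 < min 1 (δ / 2) := lt_min one_pos (half_pos hδ)
  obtain ⟨U, ⟨u, hu, hTU⟩, v, hv, hSU⟩ := hTS.nonempty_of_mem (inter_mem_inf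
    (h.tilingCylinder_patch_mem_nhds T R hδ') (h.tilingCylinder_patch_mem_nhds S (R + 2 + D) hδ'))
  rw [mem_ball_zero_iff, lt_min_iff] at hu hv
  have huv := norm_sub_le u v
  have hUS : patch (patTrans d (-v) U.1) (R + 2) ⊆ S.1 :=
    hS.patch_subset_of_patch_subset (h.boundedGeometry _ (h.patTrans_mem U.1 U.2 (-v)))
      ((patTrans_subset_iff v).1 hSU)
  have hTU' : patTrans d (u - v) (patch T.1 R) ⊆ patTrans d (-v) U.1 := by
    rw [sub_eq_add_neg, ← patTrans_patTrans]
    exact patTrans_mono (-v) hTU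
  have hTU'' := patTrans_patch_subset_patch hTU' (show R + ‖u - v‖ ≤ R + 2 by linarith)
  have hsub : patTrans d (u - v) (patch T.1 R) ⊆ S.1 := hTU''.trans hUS
  rw [hrigid (u - v) (by linarith) fun m hm => ⟨hsub hm, (hTU'' hm).2⟩, patTrans_zero] at hsub
  exact hsub hmR

lemma t2Space (h : IsLinearlyRepetitiveHull (TilingsOf d Ps) D C) : T2Space (Omega d Ps) :=
  t2_iff_nhds.2 fun {T S} hTS => Subtype.ext <| (h.subset_of_neBot_nhds_inf_nhds hTS).antisymm <|
    h.subset_of_neBot_nhds_inf_nhds (T := S) (S := T) (by rwa [inf_comm])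

lemma secondCountableTopology (h : IsLinearlyRepetitiveHull (TilingsOf d Ps) D C) :
    SecondCountableTopology (Omega d Ps) := by
  obtain ⟨T₁, hT₁⟩ := h.nonempty
  let B : Set (Set (Omega d Ps)) :=
    image2 tilingCylinder {P | P.Finite ∧ P ⊆ T₁} (TopologicalSpace.countableBasis (Pt d))
  have hB : TopologicalSpace.IsTopologicalBasis B := by
    refine TopologicalSpace.isTopologicalBasis_of_isOpen_of_nhds ?_ fun T W hTW hW => ?_
    · rintro _ ⟨P, hP, V, hV, rfl⟩
      exact h.isOpen_tilingCylinder hP.1 (TopologicalSpace.isOpen_of_mem_countableBasis hV)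
    obtain ⟨⟨R, δ⟩, hδ, hTsub⟩ := (h.hasBasis_nhds T).mem_iff.1 (hW.mem_nhds hTW)
    obtain ⟨s, -, hs⟩ :=
      h.exists_patTrans_patch_subset (max R 1) (le_max_right R 1) T.1 T.2 T₁ hT₁
    obtain ⟨V, hV, hsV, hVball⟩ := (TopologicalSpace.isBasis_countableBasis
      (Pt d)).exists_subset_of_mem_open (mem_ball_self hδ) (isOpen_ball (x := -s))
    have hfinite := ((h.boundedGeometry T.1 T.2).finite_patch (max R 1)).image
      fun m => (fun x => x + s) '' m
    refine ⟨_, mem_image2_of_mem ⟨hfinite, hs⟩ hV, ⟨-s, hsV, ?_⟩, ?_⟩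
    · exact (patTrans_neg_patTrans s _).trans_subset (patch_subset T.1 _)
    · rintro S ⟨u, hu, hS⟩
      have hsu : s + u ∈ ball 0 δ := by
        rw [mem_ball_zero_iff, add_comm, ← sub_neg_eq_add]
        exact mem_ball_iff_norm.1 (hVball hu)
      refine hTsub ⟨s + u, hsu, ?_⟩
      rw [← patTrans_patTrans]
      exact (patTrans_mono u (patTrans_mono s (patch_mono T.1 (le_max_left R 1)))).trans hS
  refine hB.secondCountableTopology (Countable.image2 ?_
    (TopologicalSpace.countable_countableBasis _) _)
  exact countable_ofPred_finite_subset (h.boundedGeometry T₁ hT₁).countable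

end IsLinearlyRepetitiveHull

/-- The whole patches of radius `r` of the tilings converge along `f` to `L` in the strong sense
that they are eventually equal to `L` up to arbitrarily small translations. -/
def IsPatchLimit (f : Filter (Omega d Ps)) (r : ℝ) (L : Set (Set (Pt d))) : Prop :=
  ∀ δ > 0, ∀ᶠ T in f, ∃ u : Pt d, ‖u‖ < δ ∧ patTrans d u L = patch T.1 r

namespace IsLinearlyRepetitiveHull

lemma exists_isPatchLimit (h : IsLinearlyRepetitiveHull (TilingsOf d Ps) D C)
    (f : Ultrafilter (Omega d Ps)) {R : ℝ} (hR : 1 ≤ R) :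
    ∃ L, IsPatchLimit (f : Filter (Omega d Ps)) R L := by
  obtain ⟨T₁, hT₁⟩ := h.nonempty
  choose s hs hsub using fun T : Omega d Ps =>
    h.exists_patTrans_patch_subset R hR T.1 T.2 T₁ hT₁
  have hcopy : ∀ T : Omega d Ps, patTrans d (s T) (patch T.1 R) ∈ 𝒫 patch T₁ (R + C * R) :=
    fun T => patTrans_patch_subset_patch (hsub T) (by linarith [hs T])
  obtain ⟨Q, -, hQ⟩ := (Ultrafilter.finite_biUnion_mem_iff (f := f)
    (s := fun Q => {T : Omega d Ps | patTrans d (s T) (patch T.1 R) = Q})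
    ((h.boundedGeometry T₁ hT₁).finite_patch (R + C * R)).powerset).1
    (univ_mem' fun T => mem_biUnion (hcopy T) rfl)
  obtain ⟨s₀, -, hs₀⟩ := (isCompact_closedBall (0 : Pt d) (C * R)).ultrafilter_le_nhds (f.map s)
    (tendsto_principal.2 (Eventually.of_forall fun T => mem_closedBall_zero_iff.2 (hs T)))
  have htendsto : Tendsto s f (𝓝 s₀) := hs₀
  refine ⟨patTrans d (-s₀) Q, fun δ hδ => ?_⟩
  filter_upwards [hQ, htendsto (ball_mem_nhds s₀ hδ)] with T hTQ hTs
  refine ⟨s₀ - s T, by rwa [← dist_eq_norm, dist_comm], ?_⟩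
  rw [← show patTrans d (s T) (patch T.1 R) = Q from hTQ, patTrans_patTrans, patTrans_patTrans,
    show s T + (-s₀ + (s₀ - s T)) = 0 by abel, patTrans_zero]

end IsLinearlyRepetitiveHull

namespace IsPatchLimit

variable {f : Filter (Omega d Ps)} [f.NeBot] {r R : ℝ} {L L' : Set (Set (Pt d))}

lemma exists_patTrans_subset (hL : IsPatchLimit f r L) :
    ∃ T ∈ TilingsOf d Ps, ∃ u, patTrans d u L ⊆ T := by
  obtain ⟨T, u, -, hT⟩ := (hL 1 one_pos).exists
  exact ⟨T.1, T.2, u, hT.trans_subset (patch_subset T.1 r)⟩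

lemma closedBall_subset_sUnion (hL : IsPatchLimit f R L) (hr : r < R) :
    closedBall 0 r ⊆ ⋃₀ L := by
  intro x hx
  rw [mem_closedBall_zero_iff] at hx
  obtain ⟨T, u, hu, hT⟩ := (hL (R - r) (sub_pos.2 hr)).exists
  have hxu : x + u ∈ supp d (patch T.1 R) := closedBall_subset_supp_patch T.2.1.2.2 R
    (mem_closedBall_zero_iff.2 ((norm_add_le x u).trans (by linarith)))
  rw [← hT] at hxu
  obtain ⟨_, ⟨m, hm, rfl⟩, y, hy, hyx⟩ := hxu
  exact ⟨m, hm, add_right_cancel hyx ▸ hy⟩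

lemma finite (h : IsLinearlyRepetitiveHull (TilingsOf d Ps) D C) (hL : IsPatchLimit f r L) :
    L.Finite := by
  obtain ⟨T, u, -, hT⟩ := (hL 1 one_pos).exists
  rw [← patTrans_neg_patTrans u L, hT]
  exact ((h.boundedGeometry T.1 T.2).finite_patch r).image _

lemma subset_of_le (h : IsLinearlyRepetitiveHull (TilingsOf d Ps) D C) (hL : IsPatchLimit f r L)
    (hL' : IsPatchLimit f R L') (hrR : r ≤ R) : L ⊆ L' := by
  intro m hm
  obtain ⟨T, hT, t, ht⟩ := hL.exists_patTrans_subset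
  have hgeom := h.boundedGeometry _ (h.patTrans_mem T hT (-t))
  have hmT := (patTrans_subset_iff t).1 ht hm
  obtain ⟨δ, hδ, hrigid⟩ := exists_forall_norm_lt_eq_zero_of_patTrans_subset (hL'.finite h) hm
    (hgeom.isCompact m hmT) (hgeom.nonempty_tile hmT)
  obtain ⟨S, ⟨u, hu, hSu⟩, v, hv, hSv⟩ :=
    ((hL _ (half_pos hδ)).and (hL' _ (half_pos hδ))).exists
  have hsub : patTrans d (u - v) L ⊆ L' := by
    rw [sub_eq_add_neg, ← patTrans_patTrans, patTrans_subset_iff, neg_neg, hSu, hSv]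
    exact patch_mono S.1 hrR
  rw [hrigid (u - v) (by linarith [norm_sub_le u v]) hsub, patTrans_zero] at hsub
  exact hsub hm

end IsPatchLimit

namespace IsLinearlyRepetitiveHull

lemma compactSpace (h : IsLinearlyRepetitiveHull (TilingsOf d Ps) D C) :
    CompactSpace (Omega d Ps) := by
  refine ⟨isCompact_iff_ultrafilter_le_nhds.2 fun f _ => ?_⟩
  choose L hL using fun n : ℕ =>
    h.exists_isPatchLimit f (le_add_of_nonneg_left n.cast_nonneg : (1 : ℝ) ≤ n + 1)
  have hmono : Monotone L := fun n k hnk =>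
    (hL n).subset_of_le h (hL k) (add_le_add_left (Nat.cast_le.2 hnk) 1)
  let T₀ : Omega d Ps := ⟨⋃ n, L n, h.iUnion_mem L hmono (fun n => (hL n).exists_patTrans_subset)
    fun n => (hL n).closedBall_subset_sUnion (lt_add_one (n : ℝ))⟩
  refine ⟨T₀, mem_univ T₀, (h.hasBasis_nhds T₀).ge_iff.2 fun ⟨R, δ⟩ hδ => ?_⟩
  obtain ⟨n, hn⟩ := exists_subset_of_finite_of_subset_iUnion hmono
    ((h.boundedGeometry T₀.1 T₀.2).finite_patch R) (patch_subset T₀.1 R)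
  filter_upwards [hL n δ hδ] with T hT
  obtain ⟨u, hu, hTu⟩ := hT
  exact ⟨u, mem_ball_zero_iff.2 hu,
    (patTrans_mono u hn).trans (hTu.trans_subset (patch_subset T.1 _))⟩

end IsLinearlyRepetitiveHull

/-- Membership of a tiling in `G` is witnessed by its patch of some radius that works for all
members. -/
def IsLocallyDetermined (G : Set (Omega d Ps)) : Prop :=
  ∃ R, ∀ S ∈ G, ∀ S' : Omega d Ps, patch S.1 R ⊆ S'.1 → S' ∈ G

lemma isLocallyDetermined_empty : IsLocallyDetermined (∅ : Set (Omega d Ps)) :=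
  ⟨0, fun _ hS => hS.elim⟩

lemma IsLocallyDetermined.union {G G' : Set (Omega d Ps)} (hG : IsLocallyDetermined G)
    (hG' : IsLocallyDetermined G') : IsLocallyDetermined (G ∪ G') := by
  obtain ⟨R, hR⟩ := hG
  obtain ⟨R', hR'⟩ := hG'
  refine ⟨max R R', fun S hS S' hSS' => hS.imp (fun hS => hR S hS S' ?_) fun hS => hR' S hS S' ?_⟩
  · exact (patch_mono S.1 (le_max_left R R')).trans hSS'
  · exact (patch_mono S.1 (le_max_right R R')).trans hSS'

lemma isLocallyDetermined_tilingCylinder_patch (T : Set (Set (Pt d))) (R δ : ℝ) :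
    IsLocallyDetermined (tilingCylinder (patch T R) (ball 0 δ) : Set (Omega d Ps)) := by
  refine ⟨R + δ, fun S ⟨u, hu, hS⟩ S' hSS' => ⟨u, hu, Subset.trans ?_ hSS'⟩⟩
  exact patTrans_patch_subset_patch hS (add_le_add_right (mem_ball_zero_iff.1 hu).le R)

namespace IsLinearlyRepetitiveHull

lemma isTopologicalBasis_isLocallyDetermined
    (h : IsLinearlyRepetitiveHull (TilingsOf d Ps) D C) :
    TopologicalSpace.IsTopologicalBasis
      {G : Set (Omega d Ps) | IsOpen G ∧ IsLocallyDetermined G} := by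
  refine TopologicalSpace.isTopologicalBasis_of_isOpen_of_nhds (fun _ hG => hG.1)
    fun T W hTW hW => ?_
  obtain ⟨⟨R, δ⟩, hδ, hsub⟩ := (h.hasBasis_nhds T).mem_iff.1 (hW.mem_nhds hTW)
  exact ⟨_, ⟨h.isOpen_tilingCylinder ((h.boundedGeometry T.1 T.2).finite_patch R) isOpen_ball,
    isLocallyDetermined_tilingCylinder_patch T.1 R δ⟩,
    mem_of_mem_nhds (h.tilingCylinder_patch_mem_nhds T R hδ), hsub⟩

lemma coe_omegaTranslate (h : IsLinearlyRepetitiveHull (TilingsOf d Ps) D C) (t : Pt d)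
    (S : Omega d Ps) : (omegaTranslate d Ps t S).1 = patTrans d (-t) S.1 :=
  congrArg Subtype.val (dif_pos (h.patTrans_mem S.1 S.2 (-t)))

lemma continuous_omegaTranslate (h : IsLinearlyRepetitiveHull (TilingsOf d Ps) D C) :
    Continuous fun p : Pt d × Omega d Ps => omegaTranslate d Ps p.1 p.2 := by
  refine continuous_iff_continuousAt.2 fun ⟨x, T⟩ => (h.hasBasis_nhds _).ge_iff.2 ?_
  rintro ⟨R, δ⟩ hδ
  refine mem_map.2 (mem_of_superset (prod_mem_nhds (ball_mem_nhds x (half_pos hδ))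
    (h.tilingCylinder_patch_mem_nhds T (R + ‖-x‖) (half_pos hδ))) ?_)
  rintro ⟨y, S⟩ ⟨hy, u, hu, hS⟩
  refine ⟨u + (x - y), ?_, ?_⟩
  · rw [mem_ball_zero_iff] at hu ⊢
    rw [mem_ball_iff_norm'] at hy
    exact (norm_add_le _ _).trans_lt ((add_lt_add hu hy).trans_eq (add_halves δ))
  · simp only [h.coe_omegaTranslate]
    refine (patTrans_mono _ (patch_patTrans_subset (-x) T.1 R)).trans ?_
    rw [patTrans_patTrans, show -x + (u + (x - y)) = u + -y by abel, ← patTrans_patTrans]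
    exact patTrans_mono (-y) hS

/-- The translation action of `ℝ^d` on `Ω(𝒫)`, as a continuous flow whose time is a vector. -/
def translationFlow (h : IsLinearlyRepetitiveHull (TilingsOf d Ps) D C) :
    Flow (Pt d) (Omega d Ps) where
  toFun := omegaTranslate d Ps
  cont' := h.continuous_omegaTranslate
  map_add' s t S := Subtype.ext <| by
    simp only [h.coe_omegaTranslate, patTrans_patTrans, neg_add_rev]
  map_zero' S := Subtype.ext <| by rw [h.coe_omegaTranslate, neg_zero, patTrans_zero]

/-- The patch of `T` of radius `2 * R` determines all the visits of `T` during the ball of radius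
`R`, and a copy of it occurs in `S` at distance at most `2 * C * R` from the origin. -/
lemma hasComparableVisits (h : IsLinearlyRepetitiveHull (TilingsOf d Ps) D C)
    {G : Set (Omega d Ps)} (hG : IsLocallyDetermined G) :
    HasComparableVisits (omegaTranslate d Ps) (2 * C + 1) G := by
  obtain ⟨R₀, hG⟩ := hG
  let R := max R₀ 1
  have hR₀ : R₀ ≤ R := le_max_left R₀ 1
  have hR : 1 ≤ R := le_max_right R₀ 1
  refine ⟨R, by linarith, fun T S => ?_⟩
  obtain ⟨t, ht, hTS⟩ := h.exists_patTrans_patch_subset (2 * R) (by linarith) T.1 T.2 S.1 S.2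
  refine ⟨t, fun x hx hxG => ?_⟩
  rw [mem_closedBall_zero_iff] at hx ⊢
  refine ⟨(norm_add_le x t).trans (by linarith), hG _ hxG _ ?_⟩
  have hradius : R₀ + ‖-x‖ ≤ 2 * R := by rw [norm_neg]; linarith
  rw [h.coe_omegaTranslate, h.coe_omegaTranslate]
  calc patch (patTrans d (-x) T.1) R₀
      ⊆ patTrans d (-x) (patch T.1 (R₀ + ‖-x‖)) := patch_patTrans_subset (-x) T.1 R₀
    _ ⊆ patTrans d (-x) (patch T.1 (2 * R)) := patTrans_mono (-x) (patch_mono T.1 hradius)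
    _ ⊆ patTrans d (-x) (patTrans d (-t) S.1) :=
      patTrans_mono (-x) ((patTrans_subset_iff t).1 hTS)
    _ = patTrans d (-(x + t)) S.1 := by rw [patTrans_patTrans, neg_add_rev]

end IsLinearlyRepetitiveHull

end TilingSpace

/-- Corollary 4.6, unique ergodicity. For a nonempty admissible
linearly repetitive `Ps`, the translation action of `ℝ^d` on the compact metric space
`Ω(Ps)` admits exactly one invariant Borel probability measure. -/
theorem omega_uniquely_ergodic (d : ℕ) (Ps : Set (Set (Set (Pt d))))
    (hne : Ps.Nonempty) (hadm : Admissible d Ps) (hlr : LinearlyRepetitive d Ps) :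
    letI : TopologicalSpace (Omega d Ps) := omegaTop d Ps
    letI : MeasurableSpace (Omega d Ps) := borel (Omega d Ps)
    ∃! μ : Measure (Omega d Ps), IsProbabilityMeasure μ ∧
      ∀ t : Pt d, Measure.map (omegaTranslate d Ps t) μ = μ := by
  obtain ⟨D, C, h⟩ := hadm.exists_isLinearlyRepetitiveHull hne hlr
  let : TopologicalSpace (Omega d Ps) := omegaTop d Ps
  let : MeasurableSpace (Omega d Ps) := borel (Omega d Ps)
  have : BorelSpace (Omega d Ps) := ⟨rfl⟩
  have : T2Space (Omega d Ps) := h.t2Space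
  have : CompactSpace (Omega d Ps) := h.compactSpace
  have : SecondCountableTopology (Omega d Ps) := h.secondCountableTopology
  have : Nonempty (Omega d Ps) := h.nonempty.to_subtype
  exact existsUnique_isInvariantProbability_of_hasComparableVisits h.translationFlow
    h.isTopologicalBasis_isLocallyDetermined ⟨isOpen_empty, isLocallyDetermined_empty⟩
    (fun U hU V hV => ⟨hU.1.union hV.1, hU.2.union hV.2⟩)
    (by linarith [h.constant_nonneg] : 0 ≤ 2 * C + 1) fun G hG => h.hasComparableVisits hG.2

end
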